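/- arXiv:1706.09675 — 2 statements merged into one kernel-verified Lean document; each statement's English description precedes it below -/
import Mathlib

section
/- Let R = k[x_1,…,x_n] be a polynomial ring over a field k, let J and H be homogeneous ideals in R, let f ∈ R be a linear form that is a non-zerodivisor on R/J, and set I = J + fH. Then depth R/I equals depth R/(J+H) or depth R/I equals depth R/J − 1; equivalently, depth R/I ∈ {depth R/(I:f), depth R/(I,f)}. -/
open MvPolynomial

/-- The depth of the `R`-module `M` with respect to the ideal `J`: the supremum of
lengths of `M`-regular sequences consisting of elements of `J`. -/
noncomputable def idealDepth {R : Type*} [CommRing R] (J : Ideal R)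
    (M : Type*) [AddCommGroup M] [Module R M] : ℕ :=
  sSup {d : ℕ | ∃ rs : List R, rs.length = d ∧ (∀ r ∈ rs, r ∈ J) ∧
    RingTheory.Sequence.IsRegular M rs}

/-- The irrelevant maximal homogeneous ideal `(x₁, …, xₙ)` of the polynomial ring. -/
noncomputable def mxIdeal (k : Type*) [Field k] (n : ℕ) : Ideal (MvPolynomial (Fin n) k) :=
  Ideal.span (Set.range MvPolynomial.X)

/-- `depth R/I`, the depth of the quotient module with respect to the maximal
homogeneous ideal. -/
noncomputable def pdepth {k : Type*} [Field k] {n : ℕ}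
    (I : Ideal (MvPolynomial (Fin n) k)) : ℕ :=
  idealDepth (mxIdeal k n) (MvPolynomial (Fin n) k ⧸ I)

/-- `p` is homogeneous of degree `d ∈ ℤ` (where `0` is homogeneous of any degree). -/
def HomogOfDeg {k : Type*} [Field k] {n : ℕ} (p : MvPolynomial (Fin n) k) (d : ℤ) : Prop :=
  p = 0 ∨ ∃ m : ℕ, (m : ℤ) = d ∧ p.IsHomogeneous m

/-- A finite graded free resolution of `R/I`: free modules `Fᵢ = ⊕_j R(-D i j)` (of rank
`b i`, zero for `i > len`), differentials given by matrices `A i : Fᵢ₊₁ → Fᵢ` whose entries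
are homogeneous of the appropriate degrees, and an augmentation `F₀ → R/I` given by the
homogeneous column `v`, the whole complex being exact. -/
structure GradedFreeRes {k : Type*} [Field k] {n : ℕ}
    (I : Ideal (MvPolynomial (Fin n) k)) where
  len : ℕ
  b : ℕ → ℕ
  hb : ∀ i : ℕ, len < i → b i = 0
  D : (i : ℕ) → Fin (b i) → ℤ
  A : (i : ℕ) → Matrix (Fin (b i)) (Fin (b (i+1))) (MvPolynomial (Fin n) k)
  v : Fin (b 0) → MvPolynomial (Fin n) k
  hv : ∀ r, HomogOfDeg (v r) (D 0 r)
  hA : ∀ (i : ℕ) r c, HomogOfDeg (A i r c) (D (i+1) c - D i r)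
  haug : Function.Surjective
    (fun w : Fin (b 0) → MvPolynomial (Fin n) k => Ideal.Quotient.mk I (∑ r, w r * v r))
  hex0 : Function.Exact ((A 0).mulVec)
    (fun w : Fin (b 0) → MvPolynomial (Fin n) k => Ideal.Quotient.mk I (∑ r, w r * v r))
  hex : ∀ i : ℕ, Function.Exact ((A (i+1)).mulVec) ((A i).mulVec)

/-- The Castelnuovo–Mumford regularity `reg R/I`: the least `r` such that some finite
graded free resolution of `R/I` has all its `i`-th twists `≤ r + i`; equivalently (via the
minimal free resolution) `reg R/I = max { j - i : β_{i,j}(R/I) ≠ 0 }`. -/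
noncomputable def regQuot {k : Type*} [Field k] {n : ℕ}
    (I : Ideal (MvPolynomial (Fin n) k)) : ℤ :=
  sInf {r : ℤ | ∃ F : GradedFreeRes I, ∀ (i : ℕ) (j : Fin (F.b i)), F.D i j - (i : ℤ) ≤ r}

/-- The regularity of a (nonzero) homogeneous ideal: `reg I = reg R/I + 1`. -/
noncomputable def regIdeal {k : Type*} [Field k] {n : ℕ}
    (I : Ideal (MvPolynomial (Fin n) k)) : ℤ :=
  regQuot I + 1

/-- An ideal is homogeneous if it is generated by homogeneous polynomials. -/
def IsHomogeneousIdeal {k : Type*} [Field k] {n : ℕ}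
    (I : Ideal (MvPolynomial (Fin n) k)) : Prop :=
  ∃ T : Set (MvPolynomial (Fin n) k), (∀ p ∈ T, ∃ d : ℕ, p.IsHomogeneous d) ∧ I = Ideal.span T

/-- A monomial ideal: an ideal generated by monomials. -/
def IsMonomialIdeal {k : Type*} [Field k] {n : ℕ}
    (I : Ideal (MvPolynomial (Fin n) k)) : Prop :=
  ∃ T : Set (Fin n →₀ ℕ), I = Ideal.span ((fun m => monomial m (1 : k)) '' T)


section helpers
open CategoryTheory Abelian

universe u

namespace DepthAux

variable {R : Type u} [CommRing R]

/-- Vanishing of `Ext^i(X, M)`. -/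
def EV (X M : Type u) [AddCommGroup X] [Module R X] [AddCommGroup M] [Module R M] (i : ℕ) :
    Prop :=
  Subsingleton (Ext (ModuleCat.of R X) (ModuleCat.of R M) i)

variable (X : Type u) [AddCommGroup X] [Module R X]
variable {A B C : Type u} [AddCommGroup A] [Module R A] [AddCommGroup B] [Module R B]
  [AddCommGroup C] [Module R C]

/-- The short complex of a pair of exact linear maps. -/
def sc (f : A →ₗ[R] B) (g : B →ₗ[R] C) (he : Function.Exact f g) :
    ShortComplex (ModuleCat.{u} R) :=
  ShortComplex.mk (ModuleCat.ofHom f) (ModuleCat.ofHom g)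
    (by ext x; exact he.apply_apply_eq_zero x)

lemma sc_shortExact (f : A →ₗ[R] B) (g : B →ₗ[R] C) (hf : Function.Injective f)
    (hg : Function.Surjective g) (he : Function.Exact f g) : (sc f g he).ShortExact where
  exact := by
    rw [ShortComplex.ShortExact.moduleCat_exact_iff_function_exact]
    exact he
  mono_f := (ModuleCat.mono_iff_injective _).2 hf
  epi_g := (ModuleCat.epi_iff_surjective _).2 hg

lemma les3 (f : A →ₗ[R] B) (g : B →ₗ[R] C) (hf : Function.Injective f)
    (hg : Function.Surjective g) (he : Function.Exact f g) (i : ℕ)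
    (hB : EV (R := R) X B i) (hA : EV (R := R) X A (i + 1)) : EV (R := R) X C i := by
  unfold EV at *
  refine subsingleton_of_forall_eq 0 fun x => ?_
  obtain ⟨y, hy⟩ := Ext.covariant_sequence_exact₃ (ModuleCat.of R X)
    (sc_shortExact f g hf hg he) x rfl (hA.elim _ _)
  rw [← hy, show y = 0 from hB.elim y 0]
  simp
  rfl

lemma les2 (f : A →ₗ[R] B) (g : B →ₗ[R] C) (hf : Function.Injective f)
    (hg : Function.Surjective g) (he : Function.Exact f g) (i : ℕ)
    (hA : EV (R := R) X A i) (hC : EV (R := R) X C i) : EV (R := R) X B i := by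
  unfold EV at *
  refine subsingleton_of_forall_eq 0 fun x => ?_
  obtain ⟨y, hy⟩ := Ext.covariant_sequence_exact₂ (ModuleCat.of R X)
    (sc_shortExact f g hf hg he) x (hC.elim _ _)
  rw [← hy, show y = 0 from hA.elim y 0]
  simp
  rfl

lemma les1 (f : A →ₗ[R] B) (g : B →ₗ[R] C) (hf : Function.Injective f)
    (hg : Function.Surjective g) (he : Function.Exact f g) (i : ℕ)
    (hC : EV (R := R) X C i) (hB : EV (R := R) X B (i + 1)) : EV (R := R) X A (i + 1) := by
  unfold EV at *
  refine subsingleton_of_forall_eq 0 fun x => ?_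
  obtain ⟨y, hy⟩ := Ext.covariant_sequence_exact₁ (ModuleCat.of R X)
    (sc_shortExact f g hf hg he) x (hB.elim _ _) rfl
  rw [← hy, show y = 0 from hC.elim y 0]
  simp
  rfl

lemma ev_zero_of_injective (f : A →ₗ[R] B) (hf : Function.Injective f)
    (hB : EV (R := R) X B 0) : EV (R := R) X A 0 := by
  unfold EV at *
  have : Mono (ModuleCat.ofHom f) := (ModuleCat.mono_iff_injective _).2 hf
  exact (Ext.postcomp_mk₀_injective_of_mono (ModuleCat.of R X) (ModuleCat.ofHom f)).subsingleton

lemma comp_smul_eq_zero (r : R) (hr : ∀ x : X, r • x = 0) (f : A →ₗ[R] B) (i : ℕ)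
    (x : Ext (ModuleCat.of R X) (ModuleCat.of R A) i) :
    x.comp (Ext.mk₀ (ModuleCat.ofHom (r • f))) (add_zero i) = 0 := by
  have h1 : ModuleCat.ofHom (r • f) = r • ModuleCat.ofHom f := rfl
  have h2 : r • 𝟙 (ModuleCat.of R X) = 0 := by
    ext y; exact hr y
  have h3 : r • x = 0 := by
    calc r • x = r • (Ext.mk₀ (𝟙 (ModuleCat.of R X))).comp x (zero_add i) := by simp
      _ = (Ext.mk₀ (r • 𝟙 (ModuleCat.of R X))).comp x (zero_add i) := by
        rw [Ext.mk₀_smul, Ext.smul_comp]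
      _ = 0 := by rw [h2]; simp
  rw [h1, Ext.mk₀_smul, Ext.comp_smul, ← Ext.smul_comp, h3]
  simp

lemma zles2 (r : R) (hr : ∀ x : X, r • x = 0)
    (f : A →ₗ[R] B) (g : B →ₗ[R] C) (hf : Function.Injective (r • f))
    (hg : Function.Surjective g) (he : Function.Exact (r • f) g) (i : ℕ)
    (hC : EV (R := R) X C i) : EV (R := R) X B i := by
  unfold EV at *
  refine subsingleton_of_forall_eq 0 fun x => ?_
  obtain ⟨y, hy⟩ := Ext.covariant_sequence_exact₂ (ModuleCat.of R X)
    (sc_shortExact (r • f) g hf hg he) x (hC.elim _ _)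
  rw [← hy]
  exact comp_smul_eq_zero X r hr f i y

lemma zles1 (r : R) (hr : ∀ x : X, r • x = 0)
    (f : A →ₗ[R] B) (g : B →ₗ[R] C) (hf : Function.Injective (r • f))
    (hg : Function.Surjective g) (he : Function.Exact (r • f) g) (i : ℕ)
    (hC : EV (R := R) X C i) : EV (R := R) X A (i + 1) := by
  unfold EV at *
  refine subsingleton_of_forall_eq 0 fun x => ?_
  obtain ⟨y, hy⟩ := Ext.covariant_sequence_exact₁ (ModuleCat.of R X)
    (sc_shortExact (r • f) g hf hg he) x (comp_smul_eq_zero X r hr f (i + 1) x) rfl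
  rw [← hy, show y = 0 from hC.elim y 0]
  simp
  rfl

lemma ev_of_subsingleton [Subsingleton A] (i : ℕ) : EV (R := R) X A i := by
  unfold EV
  refine subsingleton_of_forall_eq 0 fun x => ?_
  have h : 𝟙 (ModuleCat.of R A) = 0 := by
    ext y; exact Subsingleton.elim (α := A) _ _
  rw [← Ext.comp_mk₀_id x, h]
  simp

lemma arith (a t b : ℕ) (pA pJ pI pN : ℕ → Prop)
    (dJ : ∀ d, d ≤ t ↔ ∀ i < d, pJ i) (dI : ∀ d, d ≤ b ↔ ∀ i < d, pI i)
    (P1 : ∀ i, pA i → pJ (i + 1) → pN (i + 1)) (P2 : ∀ i, pN i → pA i → pJ i)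
    (P3 : ∀ i, pJ i → pN (i + 1) → pA i) (Q3 : ∀ i, pJ i → pN (i + 1) → pI i)
    (Q2 : ∀ i, pI i → pJ i) (Q1 : ∀ i, pI i → pN (i + 1)) (N0 : pJ 0 → pN 0) (t1 : 1 ≤ t)
    (hA : (∀ i, pA i) ∨ ∀ d, d ≤ a ↔ ∀ i < d, pA i) : b = a ∨ b = t - 1 := by
  have Jt : ∀ i < t, pJ i := (dJ t).1 le_rfl
  have Jt' : ¬ pJ t := by
    intro h
    have := (dJ (t + 1)).2 fun i hi => by
      rcases Nat.lt_succ_iff_lt_or_eq.1 hi with h' | rfl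
      exacts [Jt i h', h]
    omega
  have hbt : b ≤ t := by
    by_contra! h
    exact Jt' (Q2 t ((dI b).1 le_rfl t h))
  -- key: if `pA` vanishes below `c ≤ t` then `c - 1 ≤ b`
  have key : ∀ c ≤ t, (∀ i < c, pA i) → ∀ i < c, pN i := by
    intro c hc h i hi
    rcases i with _ | i
    · exact N0 (Jt 0 (by omega))
    · exact P1 i (h i (by omega)) (Jt (i + 1) (by omega))
  have hge : (∀ i < t, pA i) → t - 1 ≤ b := by
    intro h
    refine (dI _).2 fun i hi => Q3 i (Jt i (by omega)) (key t le_rfl h (i + 1) (by omega))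
  have hlt : (∀ i < t, pA i) → pA t → b ≤ t - 1 := by
    intro h h'
    by_contra! hb
    obtain ⟨s, rfl⟩ : ∃ s, t = s + 1 := ⟨t - 1, by omega⟩
    exact Jt' (P2 _ (Q1 s ((dI b).1 le_rfl s (by omega))) h')
  rcases hA with hA | hA
  · right
    have := hge fun i _ => hA i
    have := hlt (fun i _ => hA i) (hA t)
    omega
  · have At : ∀ i < a, pA i := (hA a).1 le_rfl
    have At' : ¬ pA a := by
      intro h
      have := (hA (a + 1)).2 fun i hi => by
        rcases Nat.lt_succ_iff_lt_or_eq.1 hi with h' | rfl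
        exacts [At i h', h]
      omega
    rcases lt_trichotomy a t with h | h | h
    · left
      apply le_antisymm
      · by_contra! hb
        exact At' (P3 a (Jt a h) (Q1 a ((dI b).1 le_rfl a hb)))
      · refine (dI a).2 fun i hi => Q3 i (Jt i (by omega)) ?_
        exact P1 i (At i hi) (Jt (i + 1) (by omega))
    · have := hge fun i hi => At i (by omega)
      omega
    · right
      have := hge fun i hi => At i (by omega)
      have := hlt (fun i hi => At i (by omega)) (At t h)
      omega

section rees
variable (m I : Ideal R)

lemma smul_lt (hm : m ≠ ⊤) (hI : I ≤ m) : m • (⊤ : Submodule R (R ⧸ I)) < ⊤ := by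
  rw [lt_top_iff_ne_top]
  intro h
  apply hm
  rw [Ideal.eq_top_iff_one]
  have h1 : (Ideal.Quotient.mk I 1) ∈ m • (⊤ : Submodule R (R ⧸ I)) := by
    rw [h]; exact Submodule.mem_top
  have h2 : m • (⊤ : Submodule R (R ⧸ I)) ≤ Submodule.map (Submodule.mkQ I) m := by
    rw [Submodule.smul_le]
    intro r hr x _
    obtain ⟨y, rfl⟩ := Submodule.mkQ_surjective I x
    exact ⟨r * y, Ideal.mul_mem_right _ _ hr, rfl⟩
  obtain ⟨y, hy, hy2⟩ := h2 h1
  have h3 : y - 1 ∈ I := (Ideal.Quotient.eq).1 hy2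
  have := m.sub_mem hy (hI h3)
  simpa using this

lemma supp_eq : Module.support R (ModuleCat.of R (R ⧸ m)) = PrimeSpectrum.zeroLocus m := by
  change Module.support R (R ⧸ m) = _
  rw [Module.support_eq_zeroLocus, Ideal.annihilator_quotient]

variable [IsNoetherianRing R]

lemma rees (hm : m ≠ ⊤) (hI : I ≤ m) (d : ℕ) :
    (∃ rs : List R, rs.length = d ∧ (∀ r ∈ rs, r ∈ m) ∧
      RingTheory.Sequence.IsRegular (R ⧸ I) rs) ↔ ∀ i < d, EV (R := R) (R ⧸ m) (R ⧸ I) i := by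
  constructor
  · rintro ⟨rs, rfl, h1, h2⟩
    exact ModuleCat.subsingleton_ext_of_exists_isRegular m (ModuleCat.of R (R ⧸ m))
      (supp_eq m).subset (ModuleCat.of R (R ⧸ I)) (smul_lt m I hm hI) rs h1 h2
  · intro h
    exact ModuleCat.exists_isRegular_of_exists_subsingleton_ext m d (ModuleCat.of R (R ⧸ I))
      (smul_lt m I hm hI) (ModuleCat.of R (R ⧸ m)) (supp_eq m) h

lemma exists_not_ev (hm : m ≠ ⊤) : ∀ I : Ideal R, I ≤ m →
    ∃ i, ¬ EV (R := R) (R ⧸ m) (R ⧸ I) i := by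
  intro I
  induction I using IsNoetherian.induction with
  | hgt I ih =>
  intro hI
  by_contra! hall
  obtain ⟨rs, hl, hmem, hreg⟩ := (rees m I hm hI 1).2 (fun i _ => hall i)
  obtain ⟨r, rfl⟩ := List.length_eq_one_iff.1 hl
  have hrm : r ∈ m := hmem r (by simp)
  have hr : IsSMulRegular (R ⧸ I) r :=
    ((RingTheory.Sequence.isRegular_cons_iff _ _ _).1 hreg).1
  have hrI : r ∉ I := by
    intro h
    have h1 : r • (1 : R ⧸ I) = r • (0 : R ⧸ I) := by
      rw [smul_zero, Algebra.smul_def, mul_one]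
      exact Ideal.Quotient.eq_zero_iff_mem.2 h
    have h2 : Ideal.Quotient.mk I 1 = 0 := hr h1
    rw [Ideal.Quotient.eq_zero_iff_mem] at h2
    exact hm ((Ideal.eq_top_iff_one m).2 (hI h2))
  have hle : I ≤ I ⊔ Ideal.span {r} := le_sup_left
  have hlt : I < I ⊔ Ideal.span {r} :=
    lt_of_le_of_ne hle fun h => hrI (by
      rw [h]; exact Ideal.mem_sup_right (Ideal.mem_span_singleton_self r))
  have hle2 : I ⊔ Ideal.span {r} ≤ m :=
    sup_le hI ((Ideal.span_singleton_le_iff_mem m).2 hrm)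
  obtain ⟨i, hi⟩ := ih _ hlt hle2
  apply hi
  refine les3 (R ⧸ m) (r • LinearMap.id : (R ⧸ I) →ₗ[R] (R ⧸ I)) (Submodule.factor hle)
    (fun x y h => hr h) (Submodule.factor_surjective hle) ?_ i (hall i) (hall (i + 1))
  intro x
  obtain ⟨y, rfl⟩ := Submodule.mkQ_surjective I x
  constructor
  · intro h
    have h : y ∈ I ⊔ Ideal.span {r} := (Submodule.Quotient.mk_eq_zero _).1 h
    obtain ⟨a, ha, b, hb, rfl⟩ := Submodule.mem_sup.1 h
    obtain ⟨c, rfl⟩ := Ideal.mem_span_singleton'.1 hb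
    refine ⟨Submodule.mkQ I c, ?_⟩
    refine (Submodule.Quotient.eq I).2 ?_
    have : r • c - (a + c * r) = - a := by rw [smul_eq_mul]; ring
    rw [this]
    exact I.neg_mem ha
  · rintro ⟨z, hz⟩
    obtain ⟨w, rfl⟩ := Submodule.mkQ_surjective I z
    rw [← hz]
    refine (Submodule.Quotient.mk_eq_zero _).2 ?_
    exact Ideal.mem_sup_right (Ideal.mem_span_singleton'.2 ⟨w, mul_comm _ _⟩)

lemma le_idealDepth_iff (hm : m ≠ ⊤) (hI : I ≤ m) (d : ℕ) :
    d ≤ idealDepth m (R ⧸ I) ↔ ∀ i < d, EV (R := R) (R ⧸ m) (R ⧸ I) i := by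
  have hset : {d : ℕ | ∃ rs : List R, rs.length = d ∧ (∀ r ∈ rs, r ∈ m) ∧
      RingTheory.Sequence.IsRegular (R ⧸ I) rs} =
      {d : ℕ | ∀ i < d, EV (R := R) (R ⧸ m) (R ⧸ I) i} := by
    ext d; exact rees m I hm hI d
  unfold idealDepth
  rw [hset]
  obtain ⟨N, hN⟩ := exists_not_ev m hm I hI
  have hb : BddAbove {d : ℕ | ∀ i < d, EV (R := R) (R ⧸ m) (R ⧸ I) i} := by
    refine ⟨N, fun d hd => ?_⟩
    by_contra! h
    exact hN (hd N h)
  have hne : {d : ℕ | ∀ i < d, EV (R := R) (R ⧸ m) (R ⧸ I) i}.Nonempty := ⟨0, by simp⟩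
  constructor
  · intro h i hi
    exact Nat.sSup_mem hne hb i (by omega)
  · intro h
    exact le_csSup hb h

theorem main (hm : m ≠ ⊤) (J H : Ideal R) (hJ : J ≤ m) (hJH : J ⊔ H ≤ m ∨ J ⊔ H = ⊤)
    (f : R) (hf : f ∈ m) (hnzd : ∀ g : R, f * g ∈ J → g ∈ J) :
    idealDepth m (R ⧸ (J ⊔ Ideal.span {f} * H)) = idealDepth m (R ⧸ (J ⊔ H)) ∨
    idealDepth m (R ⧸ (J ⊔ Ideal.span {f} * H)) = idealDepth m (R ⧸ J) - 1 := by
  have hfH : Ideal.span {f} * H ≤ m :=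
    Ideal.mul_le_left.trans ((Ideal.span_singleton_le_iff_mem m).2 hf)
  have hI : J ⊔ Ideal.span {f} * H ≤ m := sup_le hJ hfH
  have hJA : J ≤ J ⊔ H := le_sup_left
  have hJI : J ≤ J ⊔ Ideal.span {f} * H := le_sup_left
  have hreg : ∀ x y : R ⧸ J, f • x = f • y → x = y := by
    intro x y h
    obtain ⟨x, rfl⟩ := Submodule.mkQ_surjective J x
    obtain ⟨y, rfl⟩ := Submodule.mkQ_surjective J y
    have h : f • x - f • y ∈ J := (Submodule.Quotient.eq J).1 h
    refine (Submodule.Quotient.eq J).2 (hnzd _ ?_)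
    simpa [mul_sub] using h
  let N := LinearMap.ker (Submodule.factor hJA)
  have hN : ∀ y : R, Submodule.mkQ J y ∈ N ↔ y ∈ J ⊔ H := by
    intro y
    exact Submodule.Quotient.mk_eq_zero _
  have e1 : Function.Exact N.subtype (Submodule.factor hJA) := by
    intro x
    constructor
    · intro h; exact ⟨⟨x, h⟩, rfl⟩
    · rintro ⟨z, rfl⟩; exact z.2
  have i1 : Function.Injective N.subtype := Subtype.val_injective
  have s1 := Submodule.factor_surjective hJA
  have s2 := Submodule.factor_surjective hJI
  have i2 : Function.Injective (f • N.subtype) := by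
    intro x y h
    exact Subtype.ext (hreg _ _ h)
  have e2 : Function.Exact (f • N.subtype) (Submodule.factor hJI) := by
    intro x
    obtain ⟨y, rfl⟩ := Submodule.mkQ_surjective J x
    constructor
    · intro h
      have h : y ∈ J ⊔ Ideal.span {f} * H := (Submodule.Quotient.mk_eq_zero _).1 h
      obtain ⟨a, ha, b, hb, rfl⟩ := Submodule.mem_sup.1 h
      obtain ⟨c, hc, rfl⟩ := Ideal.mem_span_singleton_mul.1 hb
      refine ⟨⟨Submodule.mkQ J c, (hN c).2 (Ideal.mem_sup_right hc)⟩, ?_⟩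
      refine (Submodule.Quotient.eq J).2 ?_
      have : f • c - (a + f * c) = - a := by rw [smul_eq_mul]; ring
      rw [this]
      exact J.neg_mem ha
    · rintro ⟨⟨z, hz⟩, hz2⟩
      obtain ⟨w, rfl⟩ := Submodule.mkQ_surjective J z
      rw [← hz2]
      refine (Submodule.Quotient.mk_eq_zero _).2 ?_
      have hw := (hN w).1 hz
      obtain ⟨a, ha, b, hb, rfl⟩ := Submodule.mem_sup.1 hw
      change f * (a + b) ∈ _
      rw [mul_add]
      exact Ideal.add_mem _ (Ideal.mem_sup_left (Ideal.mul_mem_left _ _ ha))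
        (Ideal.mem_sup_right (Ideal.mem_span_singleton_mul.2 ⟨b, hb, rfl⟩))
  have hkill : ∀ x : R ⧸ m, f • x = 0 := by
    intro x
    obtain ⟨x, rfl⟩ := Submodule.mkQ_surjective m x
    exact (Submodule.Quotient.mk_eq_zero _).2 (Ideal.mul_mem_right _ _ hf)
  have dJ := le_idealDepth_iff m J hm hJ
  have dI := le_idealDepth_iff m _ hm hI
  have P1 := fun i => les1 (R ⧸ m) _ _ i1 s1 e1 i
  have P2 := fun i => les2 (R ⧸ m) _ _ i1 s1 e1 i
  have P3 := fun i => les3 (R ⧸ m) _ _ i1 s1 e1 i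
  have Q3 := fun i => les3 (R ⧸ m) _ _ i2 s2 e2 i
  have Q2 := fun i => zles2 (R ⧸ m) f hkill _ _ i2 s2 e2 i
  have Q1 := fun i => zles1 (R ⧸ m) f hkill _ _ i2 s2 e2 i
  have N0 := ev_zero_of_injective (R ⧸ m) N.subtype i1
  have t1 : 1 ≤ idealDepth m (R ⧸ J) := by
    rw [dJ, ← rees m J hm hJ]
    refine ⟨[f], rfl, by simpa using hf, ?_⟩
    refine ⟨(RingTheory.Sequence.isWeaklyRegular_singleton_iff _ _).2 fun x y h => hreg x y h, ?_⟩
    intro h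
    have h2 := smul_lt m J hm hJ
    refine absurd h2 (not_lt_of_ge ?_)
    refine h.le.trans (Submodule.smul_mono_left ?_)
    rw [Ideal.ofList_singleton]
    exact (Ideal.span_singleton_le_iff_mem m).2 hf
  have hA : (∀ i, EV (R := R) (R ⧸ m) (R ⧸ (J ⊔ H)) i) ∨
      (∀ d, d ≤ idealDepth m (R ⧸ (J ⊔ H)) ↔
        ∀ i < d, EV (R := R) (R ⧸ m) (R ⧸ (J ⊔ H)) i) := by
    rcases hJH with h | h
    · exact Or.inr (le_idealDepth_iff m _ hm h)
    · left
      intro i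
      have : Subsingleton (R ⧸ (J ⊔ H)) := Ideal.Quotient.subsingleton_iff.2 h
      exact ev_of_subsingleton _ i
  exact arith _ _ _ _ _ _ _ dJ dI P1 P2 P3 Q3 Q2 Q1 N0 t1 hA

end rees

end DepthAux

lemma DepthAux.mem_mx {k : Type*} [Field k] {n : ℕ} (p : MvPolynomial (Fin n) k) :
    p ∈ mxIdeal k n ↔ MvPolynomial.constantCoeff p = 0 := by
  constructor
  · intro h
    have : mxIdeal k n ≤ RingHom.ker (MvPolynomial.constantCoeff (R := k) (σ := Fin n)) := by
      unfold mxIdeal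
      rw [Ideal.span_le]
      rintro _ ⟨i, rfl⟩
      simp [RingHom.mem_ker]
    exact this h
  · intro h
    unfold mxIdeal
    rw [← Set.image_univ, MvPolynomial.mem_ideal_span_X_image]
    intro d hd
    by_contra! hall
    have : d = 0 := by
      ext i; simpa using hall i
    subst this
    exact (MvPolynomial.mem_support_iff.1 hd) h

lemma DepthAux.mx_ne_top (k : Type*) [Field k] (n : ℕ) : mxIdeal k n ≠ ⊤ := by
  rw [Ne, Ideal.eq_top_iff_one, DepthAux.mem_mx]
  simp

lemma DepthAux.le_or_top {k : Type*} [Field k] {n : ℕ} (I : Ideal (MvPolynomial (Fin n) k))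
    (h : IsHomogeneousIdeal I) : I ≤ mxIdeal k n ∨ I = ⊤ := by
  obtain ⟨T, hT, rfl⟩ := h
  by_cases hle : Ideal.span T ≤ mxIdeal k n
  · exact Or.inl hle
  right
  rw [Ideal.span_le, Set.not_subset] at hle
  obtain ⟨p, hp, hpm⟩ := hle
  have hc : MvPolynomial.constantCoeff p ≠ 0 := fun h => hpm ((DepthAux.mem_mx p).2 h)
  obtain ⟨d, hd⟩ := hT p hp
  have hd0 : d = 0 := by
    by_contra h0
    apply hc
    rw [MvPolynomial.constantCoeff_eq]
    exact hd.coeff_eq_zero (by simpa using Ne.symm h0)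
  subst hd0
  have : p = C (MvPolynomial.constantCoeff p) := by
    rw [MvPolynomial.constantCoeff_eq]
    exact MvPolynomial.totalDegree_eq_zero_iff_eq_C.1 (Nat.le_zero.1 hd.totalDegree_le)
  refine Ideal.eq_top_of_isUnit_mem _ (Ideal.subset_span hp) ?_
  rw [this]
  exact (isUnit_iff_ne_zero.2 hc).map C

end helpers

/-- **Theorem (depth modulo a linear form).** Let `I = J + fH` where `J, H` are homogeneous
ideals and `f` is a linear form which is a non-zerodivisor on `R/J`. Then
`depth R/I ∈ {depth R/(J+H), depth R/J - 1}` (equivalently,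
`depth R/I ∈ {depth R/(I:f), depth R/(I,f)}`). -/
theorem depth_modulo_linear_form {k : Type*} [Field k] {n : ℕ}
    (J H : Ideal (MvPolynomial (Fin n) k))
    (hJ : IsHomogeneousIdeal J) (hH : IsHomogeneousIdeal H)
    (f : MvPolynomial (Fin n) k) (hf1 : f.IsHomogeneous 1) (hf0 : f ≠ 0)
    (hnzd : ∀ g : MvPolynomial (Fin n) k, f * g ∈ J → g ∈ J)
    (I : Ideal (MvPolynomial (Fin n) k)) (hI : I = J + Ideal.span {f} * H) :
    pdepth I = pdepth (J + H) ∨ pdepth I = pdepth J - 1 := by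
  subst hI
  rw [Submodule.add_eq_sup, Submodule.add_eq_sup]
  rcases DepthAux.le_or_top J hJ with hJm | rfl
  · refine DepthAux.main (mxIdeal k n) (DepthAux.mx_ne_top k n) J H hJm ?_ f ?_ hnzd
    · rcases DepthAux.le_or_top H hH with h | rfl
      · exact Or.inl (sup_le hJm h)
      · exact Or.inr (by simp)
    · rw [DepthAux.mem_mx, MvPolynomial.constantCoeff_eq]
      exact hf1.coeff_eq_zero (by simp)
  · left
    rw [top_sup_eq, top_sup_eq]
end

section
/- Let R = k[x_1,…,x_n] be a polynomial ring over a field k, let J and H be homogeneous ideals in R, let f ∈ R be a linear form that is a non-zerodivisor on R/J, and set I = J + fH. Then reg R/I equals reg R/(J+H) + 1 or reg R/I equals reg R/J; equivalently, reg R/I ∈ {reg R/(I:f) + 1, reg R/(I,f)}. -/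
open MvPolynomial

set_option linter.unusedSimpArgs false
set_option linter.unusedSectionVars false

namespace KR
open Finset

section

variable {k : Type*} [Field k] {n : ℕ}
variable {M : Type*} [AddCommGroup M] [Module (MvPolynomial (Fin n) k) M]

/-- Koszul sign. -/
def sg (t : Fin n) (S : Finset (Fin n)) : ℤ := (-1) ^ (S.filter (· < t)).card

lemma sg_insert_of_lt {s t : Fin n} {S : Finset (Fin n)} (hs : s ∉ S) (h : s < t) :
    sg t (insert s S) = - sg t S := by
  unfold sg
  rw [filter_insert, if_pos h, card_insert_of_notMem (by simp [hs]), pow_succ]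
  ring

lemma sg_insert_of_not_lt {s t : Fin n} {S : Finset (Fin n)} (h : ¬ s < t) :
    sg t (insert s S) = sg t S := by
  unfold sg
  rw [filter_insert, if_neg h]

lemma sg_sq (t : Fin n) (S : Finset (Fin n)) : sg t S * sg t S = 1 := by
  unfold sg
  rw [← mul_pow]; simp

lemma sg_swap {s t : Fin n} {S : Finset (Fin n)} (hst : s ≠ t) (hs : s ∉ S) (ht : t ∉ S) :
    sg s (insert t S) * sg t S = - (sg t (insert s S) * sg s S) := by
  rcases lt_or_gt_of_ne hst with h | h
  · rw [sg_insert_of_lt hs h, sg_insert_of_not_lt (not_lt.2 h.le)]; ring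
  · rw [sg_insert_of_lt ht h, sg_insert_of_not_lt (not_lt.2 h.le)]; ring

/-- Koszul differential. -/
noncomputable def kd (z : Finset (Fin n) → M) (S : Finset (Fin n)) : M :=
  ∑ t : Fin n, if t ∈ S then 0 else sg t S • (X t : MvPolynomial (Fin n) k) • z (insert t S)

lemma kd_sub (z w : Finset (Fin n) → M) : kd (k := k) (z - w) = kd (k := k) z - kd (k := k) w := by
  funext S
  simp only [kd, Pi.sub_apply, ← sum_sub_distrib]
  refine sum_congr rfl fun t _ => ?_
  split_ifs <;> simp [smul_sub]

lemma kd_add (z w : Finset (Fin n) → M) : kd (k := k) (z + w) = kd (k := k) z + kd (k := k) w := by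
  funext S
  simp only [kd, Pi.add_apply, ← sum_add_distrib]
  refine sum_congr rfl fun t _ => ?_
  split_ifs <;> simp [smul_add]

lemma kd_zero : kd (k := k) (0 : Finset (Fin n) → M) = 0 := by
  funext S; simp [kd]

variable {N : Type*} [AddCommGroup N] [Module (MvPolynomial (Fin n) k) N]

lemma kd_map (φ : M →ₗ[MvPolynomial (Fin n) k] N) (z : Finset (Fin n) → M) :
    kd (k := k) (fun S => φ (z S)) = fun S => φ (kd (k := k) z S) := by
  funext S
  simp only [kd, map_sum]
  refine sum_congr rfl fun t _ => ?_
  split_ifs <;> simp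

lemma kd_smul (f : MvPolynomial (Fin n) k) (z : Finset (Fin n) → M) :
    kd (k := k) (fun S => f • z S) = fun S => f • kd (k := k) z S :=
  kd_map (LinearMap.lsmul _ M f) z

lemma kd_kd (z : Finset (Fin n) → M) : kd (k := k) (kd (k := k) z) = 0 := by
  funext S
  have : kd (k := k) (kd (k := k) z) S = ∑ q ∈ (univ : Finset (Fin n)) ×ˢ (univ : Finset (Fin n)),
      (if q.1 ∈ S ∨ q.2 ∈ S ∨ q.1 = q.2 then 0 else (sg q.2 (insert q.1 S) * sg q.1 S) •
        (X q.1 * X q.2 : MvPolynomial (Fin n) k) • z (insert q.1 (insert q.2 S))) := by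
    rw [sum_product]
    unfold kd
    refine sum_congr rfl fun t _ => ?_
    by_cases ht : t ∈ S
    · simp [ht]
    · simp only [ht, if_false, false_or, smul_sum]
      refine sum_congr rfl fun s _ => ?_
      by_cases hs : s ∈ S
      · simp [hs]
      · by_cases hst : s = t
        · simp [hst]
        · have : ¬ t = s := fun h => hst h.symm
          simp only [mem_insert, hst, hs, this, or_self, if_false]
          rw [insert_comm s t S, smul_comm (X t : MvPolynomial (Fin n) k) (sg s (insert t S)),
            smul_smul, smul_smul, mul_comm (sg t S)]
  rw [this]
  refine sum_involution (fun q _ => (q.2, q.1)) ?_ ?_ (by simp) (by simp)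
  · rintro ⟨t, s⟩ _
    by_cases hs : s ∈ S
    · simp [hs]
    by_cases ht : t ∈ S
    · simp [ht]
    by_cases hst : s = t
    · simp [hst]
    have : ¬ t = s := fun h => hst h.symm
    simp only [hst, hs, ht, this, or_self, if_false]
    rw [sg_swap hst hs ht, insert_comm s t, mul_comm (X s : MvPolynomial (Fin n) k), neg_smul]
    simp
  · rintro ⟨t, s⟩ _ h heq
    simp only [Prod.mk.injEq] at heq
    simp [heq.1] at h

/-- homotopy -/
def ke (t : Fin n) (u : Finset (Fin n) → M) (S : Finset (Fin n)) : M :=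
  if t ∈ S then sg t (S.erase t) • u (S.erase t) else 0

lemma ke_zero (t : Fin n) : ke t (0 : Finset (Fin n) → M) = 0 := by
  funext S; simp [ke]

lemma kd_ke (t : Fin n) (u : Finset (Fin n) → M) (S : Finset (Fin n)) :
    kd (k := k) (ke t u) S + ke t (kd (k := k) u) S = (X t : MvPolynomial (Fin n) k) • u S := by
  by_cases ht : t ∈ S
  · obtain ⟨T, hT, rfl⟩ : ∃ T, t ∉ T ∧ S = insert t T :=
      ⟨S.erase t, by simp, by rw [insert_erase ht]⟩
    simp only [ke, kd, mem_insert_self, if_true, erase_insert hT, smul_sum, ← sum_add_distrib]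
    rw [sum_eq_single t]
    · simp only [mem_insert_self, if_true, hT, if_false, smul_smul, sg_sq, one_smul, zero_add]
    · intro s _ hst
      by_cases hs : s ∈ T
      · simp [hs]
      have hts : t ∉ insert s T := by simp [hT, Ne.symm hst]
      simp only [mem_insert, hst, hs, or_self, if_false, true_or, or_true, if_true]
      rw [insert_comm s t T, erase_insert hts, smul_comm (X s : MvPolynomial (Fin n) k), smul_smul,
        smul_smul, ← add_smul]
      have h1 := sg_swap hst hs hT
      have : sg s (insert t T) * sg t (insert s T) + sg t T * sg s T = 0 := by
        have h2 := sg_sq t T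
        have h3 := sg_sq t (insert s T)
        calc _ = sg s (insert t T) * sg t (insert s T) * (sg t T * sg t T) + sg t T * sg s T := by
                rw [h2]; ring
          _ = (sg s (insert t T) * sg t T) * (sg t T * sg t (insert s T)) + sg t T * sg s T := by ring
          _ = - (sg t (insert s T) * sg t (insert s T)) * (sg s T * sg t T) + sg t T * sg s T := by
                rw [h1]; ring
          _ = 0 := by rw [h3]; ring
      rw [this, zero_smul]
    · simp
  · simp only [ke, kd, ht, if_false, add_zero]
    rw [sum_eq_single t]
    · simp only [ht, if_false, mem_insert_self, if_true, erase_insert ht]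
      rw [smul_comm, smul_smul, sg_sq, one_smul]
    · intro s _ hst
      have : t ≠ s := Ne.symm hst
      simp [ht, this]
    · simp

/-- graded Koszul chains -/
def KIn (G : ℤ → AddSubgroup M) (c : ℕ) (p : ℤ) (z : Finset (Fin n) → M) : Prop :=
  ∀ S, z S ∈ G p ∧ (S.card ≠ c → z S = 0)

/-- Vanishing of Koszul homology `H_c(M)` in internal degree `p`. -/
def Van (k : Type*) [Field k] (n : ℕ) {M : Type*} [AddCommGroup M]
    [Module (MvPolynomial (Fin n) k) M] (G : ℤ → AddSubgroup M) (c : ℕ) (p : ℤ) : Prop :=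
  ∀ z : Finset (Fin n) → M, KIn G c p z → kd (k := k) z = 0 →
    ∃ w, KIn G (c + 1) (p - 1) w ∧ kd (k := k) w = z

/-- closed under multiplication by variables. -/
def XG (k : Type*) [Field k] (n : ℕ) {M : Type*} [AddCommGroup M]
    [Module (MvPolynomial (Fin n) k) M] (G : ℤ → AddSubgroup M) : Prop :=
  ∀ p m (t : Fin n), m ∈ G p → (X t : MvPolynomial (Fin n) k) • m ∈ G (p + 1)

lemma KIn.sub {G : ℤ → AddSubgroup M} {c : ℕ} {p : ℤ} {z w : Finset (Fin n) → M}
    (hz : KIn G c p z) (hw : KIn G c p w) : KIn G c p (z - w) := fun S =>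
  ⟨(G p).sub_mem (hz S).1 (hw S).1, fun h => by simp [(hz S).2 h, (hw S).2 h]⟩

lemma KIn.add {G : ℤ → AddSubgroup M} {c : ℕ} {p : ℤ} {z w : Finset (Fin n) → M}
    (hz : KIn G c p z) (hw : KIn G c p w) : KIn G c p (z + w) := fun S =>
  ⟨(G p).add_mem (hz S).1 (hw S).1, fun h => by simp [(hz S).2 h, (hw S).2 h]⟩

lemma KIn.kd {G : ℤ → AddSubgroup M} (hG : XG k n G) {c : ℕ} {p : ℤ} {z : Finset (Fin n) → M}
    (hz : KIn G (c + 1) p z) : KIn G c (p + 1) (kd (k := k) z) := by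
  intro S
  constructor
  · refine sum_mem fun t _ => ?_
    split_ifs
    · exact zero_mem _
    · exact zsmul_mem (hG _ _ _ (hz _).1) _
  · intro h
    refine sum_eq_zero fun t _ => ?_
    split_ifs with ht
    · rfl
    · rw [(hz _).2]
      · simp
      · rw [card_insert_of_notMem ht]; omega

lemma KIn.kd' {G : ℤ → AddSubgroup M} (hG : XG k n G) {c : ℕ} {p : ℤ} {z : Finset (Fin n) → M}
    (hz : KIn G (c + 1) (p - 1) z) : KIn G c p (KR.kd (k := k) z) := by
  simpa using hz.kd hG

lemma KIn.kd_eq_zero {G : ℤ → AddSubgroup M} {p : ℤ} {z : Finset (Fin n) → M}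
    (hz : KIn G 0 p z) : KR.kd (k := k) z = 0 := by
  funext S
  refine sum_eq_zero fun t _ => ?_
  split_ifs with ht
  · rfl
  · rw [(hz _).2]
    · simp
    · simp [card_insert_of_notMem ht]

lemma Van.of_gt (G : ℤ → AddSubgroup M) {c : ℕ} (hc : n < c) (p : ℤ) : Van k n G c p := by
  intro z hz _
  refine ⟨0, fun S => ⟨zero_mem _, fun _ => rfl⟩, ?_⟩
  rw [kd_zero]
  funext S
  refine ((hz S).2 ?_).symm
  have := card_le_univ S
  simp at this
  omega

section
variable {A B C : Type*} [AddCommGroup A] [Module (MvPolynomial (Fin n) k) A]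
  [AddCommGroup B] [Module (MvPolynomial (Fin n) k) B]
  [AddCommGroup C] [Module (MvPolynomial (Fin n) k) C]

/-- graded short exact sequences -/
structure SES (GA : ℤ → AddSubgroup A) (GB : ℤ → AddSubgroup B) (GC : ℤ → AddSubgroup C)
    (φ : A →ₗ[MvPolynomial (Fin n) k] B) (ψ : B →ₗ[MvPolynomial (Fin n) k] C) : Prop where
  xA : XG k n GA
  xB : XG k n GB
  xC : XG k n GC
  inj : ∀ a, φ a = 0 → a = 0
  mapA : ∀ p a, a ∈ GA p → φ a ∈ GB p
  mapB : ∀ p b, b ∈ GB p → ψ b ∈ GC p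
  comp : ∀ a, ψ (φ a) = 0
  ex : ∀ p b, b ∈ GB p → ψ b = 0 → ∃ a ∈ GA p, φ a = b
  surj : ∀ p c, c ∈ GC p → ∃ b ∈ GB p, ψ b = c

variable {GA : ℤ → AddSubgroup A} {GB : ℤ → AddSubgroup B} {GC : ℤ → AddSubgroup C}
    {φ : A →ₗ[MvPolynomial (Fin n) k] B} {ψ : B →ₗ[MvPolynomial (Fin n) k] C}

lemma KIn.map {N : Type*} [AddCommGroup N] [Module (MvPolynomial (Fin n) k) N]
    {G : ℤ → AddSubgroup M} {G' : ℤ → AddSubgroup N} (φ : M →ₗ[MvPolynomial (Fin n) k] N)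
    (h : ∀ p a, a ∈ G p → φ a ∈ G' p) {c : ℕ} {p : ℤ} {z : Finset (Fin n) → M} (hz : KIn G c p z) :
    KIn G' c p (fun S => φ (z S)) :=
  fun S => ⟨h _ _ (hz S).1, fun hS => by simp [(hz S).2 hS]⟩

lemma KIn.lift (ψ : B →ₗ[MvPolynomial (Fin n) k] C)
    (hs : ∀ p c, c ∈ GC p → ∃ b ∈ GB p, ψ b = c) {c : ℕ} {p : ℤ}
    {z : Finset (Fin n) → C} (hz : KIn GC c p z) :
    ∃ y, KIn GB c p y ∧ (fun S => ψ (y S)) = z := by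
  choose y hy hy' using fun S => hs p (z S) (hz S).1
  refine ⟨fun S => if S.card = c then y S else 0, fun S => ⟨?_, ?_⟩, ?_⟩
  · dsimp only; split_ifs
    · exact hy S
    · exact zero_mem _
  · intro h; simp [h]
  · funext S
    dsimp only
    split_ifs with h
    · exact hy' S
    · rw [map_zero, (hz S).2 h]

lemma SES.lift' (E : SES GA GB GC φ ψ) {c : ℕ} {p : ℤ} {y : Finset (Fin n) → B}
    (hy : KIn GB c p y) (h0 : (fun S => ψ (y S)) = 0) :
    ∃ x, KIn GA c p x ∧ (fun S => φ (x S)) = y := by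
  choose x hx hx' using fun S => E.ex p (y S) (hy S).1 (congrFun h0 S)
  refine ⟨x, fun S => ⟨hx S, fun h => E.inj _ ?_⟩, funext hx'⟩
  rw [hx' S, (hy S).2 h]

lemma SES.ext (E : SES GA GB GC φ ψ) {z w : Finset (Fin n) → A}
    (h : (fun S => φ (z S)) = fun S => φ (w S)) : z = w := by
  funext S
  have := congrFun h S
  exact sub_eq_zero.1 (E.inj _ (by rw [map_sub, sub_eq_zero]; exact this))

lemma SES.van_mid (E : SES GA GB GC φ ψ) {c : ℕ} {p : ℤ} (hA : Van k n GA c p)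
    (hC : Van k n GC c p) : Van k n GB c p := by
  intro z hz hz0
  obtain ⟨w, hw, hwz⟩ := hC _ (hz.map ψ E.mapB) (by rw [kd_map, hz0]; funext S; simp)
  obtain ⟨y, hy, rfl⟩ := KIn.lift ψ E.surj hw
  rw [kd_map] at hwz
  obtain ⟨x, hx, hxe⟩ := E.lift' (hz.sub (hy.kd' E.xB)) (by
    funext S; simpa [sub_eq_zero] using (congrFun hwz S).symm)
  obtain ⟨u, hu, hux⟩ := hA x hx (E.ext (by
    rw [← kd_map, hxe, kd_sub, kd_kd, hz0]; funext S; simp))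
  refine ⟨y + fun S => φ (u S), hy.add (hu.map φ E.mapA), ?_⟩
  rw [kd_add, kd_map, hux, hxe]; simp

lemma SES.van_left' (E : SES GA GB GC φ ψ) {c : ℕ} {p : ℤ}
    (hC : Van k n GC (c + 1) (p - 1)) {z : Finset (Fin n) → A} 
    {w : Finset (Fin n) → B} (hw : KIn GB (c + 1) (p - 1) w)
    (hwz : kd (k := k) w = fun S => φ (z S)) :
    ∃ w, KIn GA (c + 1) (p - 1) w ∧ kd (k := k) w = z := by
  obtain ⟨u, hu, huw⟩ := hC _ (hw.map ψ E.mapB) (by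
    rw [kd_map, hwz]; funext S; simp [E.comp])
  obtain ⟨y, hy, rfl⟩ := KIn.lift ψ E.surj hu
  rw [kd_map] at huw
  obtain ⟨x, hx, hxe⟩ := E.lift' (hw.sub (hy.kd' E.xB)) (by
    funext S; simpa [sub_eq_zero] using (congrFun huw S).symm)
  refine ⟨x, hx, E.ext ?_⟩
  rw [← kd_map, hxe, kd_sub, kd_kd, hwz, sub_zero]

lemma SES.van_left (E : SES GA GB GC φ ψ) {c : ℕ} {p : ℤ} (hB : Van k n GB c p)
    (hC : Van k n GC (c + 1) (p - 1)) : Van k n GA c p := by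
  intro z hz hz0
  obtain ⟨w, hw, hwz⟩ := hB _ (hz.map φ E.mapA) (by rw [kd_map, hz0]; funext S; simp)
  exact E.van_left' hC hw hwz

lemma SES.van_right (E : SES GA GB GC φ ψ) {c : ℕ} {p : ℤ} (hB : Van k n GB c p)
    (hA : ∀ c', c = c' + 1 → Van k n GA c' (p + 1)) : Van k n GC c p := by
  intro z hz hz0
  obtain ⟨y, hy, rfl⟩ := KIn.lift ψ E.surj hz
  obtain ⟨x, hx, hx'⟩ : ∃ x, KIn GA c p x ∧ kd (k := k) (y - fun S => φ (x S)) = 0 := by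
    rcases c with _ | c
    · exact ⟨0, fun S => ⟨zero_mem _, fun _ => rfl⟩, by
        rw [kd_sub, hy.kd_eq_zero, kd_map, kd_zero]; funext S; simp⟩
    · rw [kd_map] at hz0
      obtain ⟨x, hx, hxe⟩ := E.lift' (hy.kd E.xB) hz0
      obtain ⟨u, hu, hux⟩ := hA c rfl x hx (E.ext (by
        rw [← kd_map, hxe, kd_kd]; funext S; simp))
      refine ⟨u, by simpa using hu, ?_⟩
      rw [kd_sub, kd_map, hux, hxe, sub_self]
  obtain ⟨w, hw, hwz⟩ := hB _ (hy.sub (hx.map φ E.mapA)) hx'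
  refine ⟨_, hw.map ψ E.mapB, ?_⟩
  rw [kd_map, hwz]
  funext S; simp [E.comp]
end


/-! ### The polynomial ring -/

/-- homogeneous polynomials of integer degree -/
def GR (k : Type*) [Field k] (n : ℕ) (p : ℤ) : AddSubgroup (MvPolynomial (Fin n) k) where
  carrier := {f | ∀ a, coeff a f ≠ 0 → (a.degree : ℤ) = p}
  add_mem' := by
    intro f g hf hg a h
    by_cases h1 : coeff a f = 0
    · by_cases h2 : coeff a g = 0
      · simp [h1, h2] at h
      · exact hg a h2
    · exact hf a h1
  zero_mem' := by intro a h; simp at h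
  neg_mem' := by intro f hf a h; exact hf a (by simpa using h)

lemma mem_GR {p : ℤ} {f : MvPolynomial (Fin n) k} :
    f ∈ GR k n p ↔ ∀ a, coeff a f ≠ 0 → (a.degree : ℤ) = p := Iff.rfl

lemma mem_GR_iff_isHomogeneous {m : ℕ} {f : MvPolynomial (Fin n) k} :
    f ∈ GR k n m ↔ f.IsHomogeneous m := by
  rw [mem_GR]
  constructor
  · intro h a ha
    have := h a ha
    have h2 : (Finsupp.weight 1) a = a.degree := by rw [Finsupp.degree_eq_weight_one]; rfl
    rw [h2]
    exact_mod_cast this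
  · intro h a ha
    have := h ha
    have h2 : (Finsupp.weight 1) a = a.degree := by rw [Finsupp.degree_eq_weight_one]; rfl
    rw [h2] at this
    exact_mod_cast this

lemma homogOfDeg_iff {p : ℤ} {f : MvPolynomial (Fin n) k} :
    HomogOfDeg f p ↔ f ∈ GR k n p := by
  constructor
  · rintro (rfl | ⟨m, rfl, h⟩)
    · exact zero_mem _
    · exact mem_GR_iff_isHomogeneous.2 h
  · intro h
    by_cases h0 : f = 0
    · exact Or.inl h0
    · right
      obtain ⟨a, ha⟩ := ne_zero_iff.1 h0
      have := h a ha
      subst this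
      exact ⟨_, rfl, mem_GR_iff_isHomogeneous.1 h⟩

lemma GR_neg {p : ℤ} (hp : p < 0) {f : MvPolynomial (Fin n) k} (hf : f ∈ GR k n p) : f = 0 := by
  by_contra h0
  obtain ⟨a, ha⟩ := ne_zero_iff.1 h0
  have := hf a ha
  omega

lemma GR_mul {p q : ℤ} {f g : MvPolynomial (Fin n) k} (hf : f ∈ GR k n p) (hg : g ∈ GR k n q) :
    f * g ∈ GR k n (p + q) := by
  intro a ha
  rw [coeff_mul] at ha
  obtain ⟨x, hx, hne⟩ := exists_ne_zero_of_sum_ne_zero ha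
  rw [HasAntidiagonal.mem_antidiagonal] at hx
  have h1 := hf _ (left_ne_zero_of_mul hne)
  have h2 := hg _ (right_ne_zero_of_mul hne)
  rw [← hx, map_add]; push_cast; omega

lemma GR_X (t : Fin n) : (X t : MvPolynomial (Fin n) k) ∈ GR k n 1 := by
  exact_mod_cast mem_GR_iff_isHomogeneous.2 (isHomogeneous_X k t)

lemma GR_one : (1 : MvPolynomial (Fin n) k) ∈ GR k n 0 := by
  exact_mod_cast mem_GR_iff_isHomogeneous.2 (isHomogeneous_one (Fin n) k)

lemma GR_zero_const {f : MvPolynomial (Fin n) k} (hf : f ∈ GR k n 0) : f = MvPolynomial.C (coeff 0 f) := by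
  ext a
  rw [coeff_C]
  split_ifs with h
  · rw [h]
  · by_contra hne
    have := hf a hne
    have : a.degree = 0 := by exact_mod_cast this
    rw [Finsupp.degree_eq_zero_iff] at this
    exact h this.symm

lemma xGR : XG k n (GR k n) := by
  intro p m t hm
  rw [smul_eq_mul, add_comm]
  exact GR_mul (GR_X t) hm

/-- homogeneous components -/
noncomputable def hc (p : ℤ) : MvPolynomial (Fin n) k →+ MvPolynomial (Fin n) k :=
  if 0 ≤ p then (homogeneousComponent p.toNat).toAddMonoidHom else 0

lemma coeff_hc (p : ℤ) (f : MvPolynomial (Fin n) k) (a : Fin n →₀ ℕ) :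
    coeff a (hc p f) = if (a.degree : ℤ) = p then coeff a f else 0 := by
  unfold hc
  split_ifs with h1 h2 h2
  · have : a.degree = p.toNat := by omega
    simp [coeff_homogeneousComponent, this]
  · have : ¬ a.degree = p.toNat := by omega
    simp [coeff_homogeneousComponent, this]
  · omega
  · simp

lemma hc_mem (p : ℤ) (f : MvPolynomial (Fin n) k) : hc p f ∈ GR k n p := by
  intro a h
  rw [coeff_hc] at h
  by_contra h'
  simp [h'] at h

lemma hc_of_mem {p : ℤ} {f : MvPolynomial (Fin n) k} (hf : f ∈ GR k n p) : hc p f = f := by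
  ext a
  rw [coeff_hc]
  split_ifs with h
  · rfl
  · by_contra h'
    exact h (hf a (Ne.symm h'))

lemma hc_of_mem_ne {p q : ℤ} {f : MvPolynomial (Fin n) k} (hf : f ∈ GR k n q) (hpq : p ≠ q) :
    hc p f = 0 := by
  ext a
  rw [coeff_hc]
  split_ifs with h
  · by_contra h'
    exact hpq (h.symm.trans (hf a h'))
  · simp

lemma hc_mul {p e : ℤ} {a : MvPolynomial (Fin n) k} (ha : a ∈ GR k n e)
    (f : MvPolynomial (Fin n) k) : hc p (a * f) = a * hc (p - e) f := by
  ext m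
  rw [coeff_hc, coeff_mul, coeff_mul]
  have : ∀ x ∈ antidiagonal m, coeff x.1 a * coeff x.2 (hc (p - e) f) =
      if (m.degree : ℤ) = p then coeff x.1 a * coeff x.2 f else 0 := by
    intro x hx
    rw [HasAntidiagonal.mem_antidiagonal] at hx
    by_cases h0 : coeff x.1 a = 0
    · simp [h0]
    · have h1 := ha _ h0
      rw [coeff_hc, ← hx, map_add]
      push_cast
      by_cases h2 : (x.2.degree : ℤ) = p - e
      · rw [if_pos h2, if_pos (by omega)]
      · rw [if_neg h2, if_neg (by omega), mul_zero]
  rw [sum_congr rfl this]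
  split_ifs <;> simp

/-- `dv t` sends `x^a` to `x^(a - e_t)` if `t` is the first variable of the monomial. -/
noncomputable def dv (t : Fin n) (f : MvPolynomial (Fin n) k) : MvPolynomial (Fin n) k :=
  ∑ a ∈ f.support, if a t ≠ 0 ∧ ∀ s < t, a s = 0 then monomial (a - Finsupp.single t 1) (coeff a f)
    else 0

lemma coeff_dv (t : Fin n) (f : MvPolynomial (Fin n) k) (b : Fin n →₀ ℕ) :
    coeff b (dv t f) = if ∀ s < t, b s = 0 then coeff (b + Finsupp.single t 1) f else 0 := by
  classical
  unfold dv
  rw [coeff_sum, sum_eq_single (b + Finsupp.single t 1)]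
  · have h1 : ∀ s < t, (b + Finsupp.single t 1 : Fin n →₀ ℕ) s = b s := by
      intro s hs
      simp [Finsupp.single_apply, hs.ne']
    by_cases h : ∀ s < t, b s = 0
    · rw [if_pos h, if_pos ⟨by simp, fun s hs => by rw [h1 s hs, h s hs]⟩]
      simp
    · rw [if_neg h, if_neg, coeff_zero]
      rintro ⟨-, h2⟩
      exact h fun s hs => by rw [← h1 s hs, h2 s hs]
  · intro a _ hab
    split_ifs with h
    · rw [coeff_monomial, if_neg]
      intro h2
      apply hab
      rw [← h2]
      ext s
      by_cases hs : s = t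
      · subst hs; have := h.1; simp; omega
      · simp [Finsupp.single_apply, Ne.symm hs]
    · simp
  · intro h
    rw [notMem_support_iff] at h
    simp [h]

lemma dv_add (t : Fin n) (f g : MvPolynomial (Fin n) k) : dv t (f + g) = dv t f + dv t g := by
  ext b
  simp only [coeff_dv, coeff_add]
  split_ifs <;> simp

/-- additive version of `dv` -/
noncomputable def dvh (t : Fin n) : MvPolynomial (Fin n) k →+ MvPolynomial (Fin n) k :=
  AddMonoidHom.mk' (dv t) (dv_add t)

lemma coeff_dvh (t : Fin n) (f : MvPolynomial (Fin n) k) (b : Fin n →₀ ℕ) :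
    coeff b (dvh t f) = if ∀ s < t, b s = 0 then coeff (b + Finsupp.single t 1) f else 0 :=
  coeff_dv t f b

lemma dvh_mem (t : Fin n) {f : MvPolynomial (Fin n) k} {p : ℤ} (hf : f ∈ GR k n p) :
    dvh t f ∈ GR k n (p - 1) := by
  intro b hb
  rw [coeff_dvh] at hb
  split_ifs at hb with h
  · have := hf _ hb
    rw [map_add] at this
    simp at this
    omega
  · simp at hb

lemma dvh_X_mul_of_lt {s t : Fin n} (h : s < t) (f : MvPolynomial (Fin n) k) :
    dvh t (X s * f) = 0 := by
  ext b
  rw [coeff_dvh]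
  split_ifs with hb
  · rw [coeff_X_mul', if_neg, coeff_zero]
    have := hb s h
    simp [Finsupp.single_apply, h.ne', this]
  · simp

lemma dvh_X_mul_of_gt {s t : Fin n} (h : t < s) (f : MvPolynomial (Fin n) k) :
    dvh t (X s * f) = X s * dvh t f := by
  ext b
  rw [coeff_dvh, coeff_X_mul', coeff_X_mul', coeff_dvh]
  have h1 : (s ∈ (b + Finsupp.single t 1).support) ↔ s ∈ b.support := by
    simp [Finsupp.single_apply, h.ne]
  have h2 : (∀ r < t, (b - Finsupp.single s 1 : Fin n →₀ ℕ) r = 0) ↔ ∀ r < t, b r = 0 := by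
    refine forall₂_congr fun r hr => ?_
    simp [Finsupp.single_apply, (hr.trans h).ne']
  simp only [h1, h2]
  by_cases hs : s ∈ b.support
  · have h3 : b + Finsupp.single t 1 - Finsupp.single s 1
        = b - Finsupp.single s 1 + Finsupp.single t 1 := by
      ext r
      by_cases hr : r = t
      · subst hr; simp [Finsupp.single_apply, h.ne']
      · simp [Finsupp.single_apply, Ne.symm hr]
    simp [hs, h3]
  · simp [hs]

lemma coeff_X_dvh (t : Fin n) (f : MvPolynomial (Fin n) k) (b : Fin n →₀ ℕ) :
    coeff b (X t * dvh t f) = if b t ≠ 0 ∧ ∀ s < t, b s = 0 then coeff b f else 0 := by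
  rw [coeff_X_mul', coeff_dvh]
  by_cases hb : b t = 0
  · simp [hb]
  · have h2 : (∀ r < t, (b - Finsupp.single t 1 : Fin n →₀ ℕ) r = 0) ↔ ∀ r < t, b r = 0 := by
      refine forall₂_congr fun r hr => ?_
      simp [Finsupp.single_apply, hr.ne']
    have h3 : b - Finsupp.single t 1 + Finsupp.single t 1 = b := by
      ext r
      by_cases hr : r = t
      · subst hr; simp; omega
      · simp [Finsupp.single_apply, Ne.symm hr]
    simp only [h2, h3]
    simp [hb]

lemma coeff_dvh_X (t : Fin n) (f : MvPolynomial (Fin n) k) (b : Fin n →₀ ℕ) :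
    coeff b (dvh t (X t * f)) = if ∀ s < t, b s = 0 then coeff b f else 0 := by
  rw [coeff_dvh, add_comm, coeff_X_mul]

lemma exists_first {b : Fin n →₀ ℕ} {t : Fin n} (ht : b t ≠ 0) :
    ∃ s ≤ t, b s ≠ 0 ∧ ∀ r < s, b r = 0 := by
  have hne : (univ.filter fun s => b s ≠ 0).Nonempty := ⟨t, by simp [ht]⟩
  refine ⟨(univ.filter fun s => b s ≠ 0).min' hne, min'_le _ _ (by simp [ht]), ?_, ?_⟩
  · have := min'_mem _ hne
    simpa using this
  · intro r hr
    by_contra h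
    exact absurd (min'_le (univ.filter fun s => b s ≠ 0) r (by simp [h])) (not_le.2 hr)

lemma sum_X_dvh (f : MvPolynomial (Fin n) k) (h0 : coeff 0 f = 0) : ∑ t, X t * dvh t f = f := by
  ext b
  simp only [coeff_sum, coeff_X_dvh]
  by_cases hb : b = 0
  · subst hb; simp [h0]
  · obtain ⟨t, ht⟩ : ∃ t, b t ≠ 0 := by
      by_contra h; push Not at h; exact hb (Finsupp.ext h)
    obtain ⟨s, _, hs, hs'⟩ := exists_first ht
    rw [sum_eq_single s, if_pos ⟨hs, hs'⟩]
    · intro r _ hr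
      rw [if_neg]
      rintro ⟨h1, h2⟩
      rcases lt_or_gt_of_ne hr with h | h
      · exact h1 (hs' r h)
      · exact hs (h2 s h)
    · simp

lemma sum_trunc (m : Fin n) (f : MvPolynomial (Fin n) k) :
    ∑ s, (if s < m then X s * dvh s f else if s = m then dvh m (X m * f) else 0) = f := by
  ext b
  have : ∀ s, coeff b (if s < m then X s * dvh s f else if s = m then dvh m (X m * f) else 0) =
      if (s < m ∧ b s ≠ 0 ∧ ∀ r < s, b r = 0) ∨ (s = m ∧ ∀ r < m, b r = 0) then coeff b f
        else 0 := by
    intro s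
    by_cases h : s < m
    · simp [h, coeff_X_dvh, h.ne]
    · by_cases h' : s = m
      · subst h'; simp [coeff_dvh_X]
      · simp [h, h']
  rw [coeff_sum, sum_congr rfl fun s _ => this s]
  by_cases hb : ∀ r < m, b r = 0
  · rw [sum_eq_single m, if_pos (Or.inr ⟨rfl, hb⟩)]
    · intro s _ hs
      rw [if_neg]
      rintro (⟨h1, h2, _⟩ | ⟨h1, _⟩)
      · exact h2 (hb s h1)
      · exact hs h1
    · simp
  · push Not at hb
    obtain ⟨t, htm, ht⟩ := hb
    obtain ⟨s, hst, hs, hs'⟩ := exists_first ht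
    rw [sum_eq_single s, if_pos (Or.inl ⟨hst.trans_lt htm, hs, hs'⟩)]
    · intro r _ hr
      rw [if_neg]
      rintro (⟨h1, h2, h3⟩ | ⟨h1, h2⟩)
      · rcases lt_or_gt_of_ne hr with h | h
        · exact h2 (hs' r h)
        · exact hs (h3 s h)
      · exact ht (h2 t htm)
    · simp

/-- contracting homotopy for the polynomial ring -/
noncomputable def kh (z : Finset (Fin n) → MvPolynomial (Fin n) k) (S : Finset (Fin n)) :
    MvPolynomial (Fin n) k :=
  if h : S.Nonempty then dvh (S.min' h) (z (S.erase (S.min' h))) else 0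

lemma kh_insert (z : Finset (Fin n) → MvPolynomial (Fin n) k) {S : Finset (Fin n)} {m : Fin n}
    (h : ∀ s ∈ S, m < s) : kh z (insert m S) = dvh m (z S) := by
  have hne : (insert m S).Nonempty := insert_nonempty _ _
  have hm : (insert m S).min' hne = m := by
    apply le_antisymm
    · exact min'_le _ _ (mem_insert_self _ _)
    · apply le_min'
      intro y hy
      rcases mem_insert.1 hy with rfl | hy
      · exact le_rfl
      · exact (h y hy).le
  have hmS : m ∉ S := fun h' => lt_irrefl _ (h m h')
  unfold kh
  rw [dif_pos hne, hm, erase_insert hmS]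

lemma vanR {c : ℕ} {p : ℤ} (h : c ≠ 0 ∨ p ≠ 0) : Van k n (GR k n) c p := by
  intro z hz hz0
  refine ⟨kh z, fun S => ⟨?_, ?_⟩, ?_⟩
  · unfold kh
    split_ifs
    · exact dvh_mem _ (hz _).1
    · exact zero_mem _
  · intro hc
    unfold kh
    split_ifs with hS
    · rw [(hz _).2, map_zero]
      have := card_erase_add_one (min'_mem S hS)
      omega
    · rfl
  · funext S
    rcases S.eq_empty_or_nonempty with rfl | hS
    · have : coeff 0 (z ∅) = 0 := by
        by_contra hne
        rcases h with h | h
        · exact hne (by rw [(hz ∅).2 (by simpa using h.symm)]; simp)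
        · exact h (by simpa using ((hz ∅).1 0 hne).symm)
      rw [← sum_X_dvh _ this]
      unfold kd
      refine sum_congr rfl fun t _ => ?_
      rw [kh_insert z (by simp)]
      simp [sg]
    · obtain ⟨m, T, hm, rfl⟩ : ∃ m T, (∀ s ∈ T, m < s) ∧ S = insert m T := by
        refine ⟨S.min' hS, S.erase (S.min' hS), fun s hs => ?_, by
          rw [insert_erase (min'_mem S hS)]⟩
        exact lt_of_le_of_ne (min'_le _ _ (mem_of_mem_erase hs)) (ne_of_mem_erase hs).symm
      have hmT : m ∉ T := fun h' => lt_irrefl _ (hm m h')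
      have h0 : dvh m (kd (k := k) z T) = 0 := by rw [hz0]; simp
      have key : kd (k := k) (kh z) (insert m T) + dvh m (kd (k := k) z T) = z (insert m T) := by
        rw [← sum_trunc m (z (insert m T))]
        unfold kd
        rw [map_sum, ← sum_add_distrib]
        refine sum_congr rfl fun s _ => ?_
        rcases lt_trichotomy s m with hs | rfl | hs
        · have hsT : s ∉ T := fun h' => lt_asymm hs (hm s h')
          have h1 : s ∉ insert m T := by simp [hs.ne, hsT]
          have h2 : ∀ r ∈ insert m T, s < r := by
            intro r hr
            rcases mem_insert.1 hr with rfl | hr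
            · exact hs
            · exact hs.trans (hm r hr)
          have h3 : sg s (insert m T) = 1 := by
            unfold sg
            rw [filter_false_of_mem (fun r hr => not_lt.2 (h2 r hr).le)]; simp
          rw [if_neg h1, if_neg hsT, if_pos hs, kh_insert z h2, h3, map_zsmul, smul_eq_mul,
            smul_eq_mul, dvh_X_mul_of_lt hs]
          simp
        · have h3 : sg s T = 1 := by
            unfold sg
            rw [filter_false_of_mem (fun r hr => not_lt.2 (hm r hr).le)]; simp
          simp [hmT, h3]
        · by_cases hsT : s ∈ T
          · simp [hsT, hs.not_gt, hs.ne']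
          · have h1 : s ∉ insert m T := by simp [hs.ne', hsT]
            have h2 : ∀ r ∈ insert s T, m < r := by
              intro r hr
              rcases mem_insert.1 hr with rfl | hr
              · exact hs
              · exact hm r hr
            rw [if_neg h1, if_neg hsT, if_neg hs.not_gt, if_neg hs.ne', insert_comm, kh_insert z h2,
              sg_insert_of_lt hmT hs, map_zsmul, smul_eq_mul, smul_eq_mul, dvh_X_mul_of_gt hs]
            simp
      rw [h0, add_zero] at key
      exact key


/-! ### Free modules -/

end
section
variable {k : Type*} [Field k] {n : ℕ}

/-- grading of a twisted free module -/
def GF {b : ℕ} (D : Fin b → ℤ) (p : ℤ) : AddSubgroup (Fin b → MvPolynomial (Fin n) k) where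
  carrier := {w | ∀ j, w j ∈ GR k n (p - D j)}
  add_mem' := fun hf hg j => add_mem (hf j) (hg j)
  zero_mem' := fun _ => zero_mem _
  neg_mem' := fun hf j => neg_mem (hf j)

lemma mem_GF {b : ℕ} {D : Fin b → ℤ} {p : ℤ} {w : Fin b → MvPolynomial (Fin n) k} :
    w ∈ GF D p ↔ ∀ j, w j ∈ GR k n (p - D j) := Iff.rfl

lemma xGF {b : ℕ} (D : Fin b → ℤ) : XG k n (GF (k := k) (n := n) D) := by
  intro p m t hm j
  have := xGR _ _ t (hm j)
  rw [show p + 1 - D j = p - D j + 1 by ring]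
  exact this

lemma vanF' {b : ℕ} {D : Fin b → ℤ} {c : ℕ} {p : ℤ}
    {z : Finset (Fin n) → Fin b → MvPolynomial (Fin n) k} (hz : KIn (GF D) c p z)
    (hz0 : kd (k := k) z = 0) (h : c = 0 → ∀ j, D j = p → z ∅ j = 0) :
    ∃ w, KIn (GF D) (c + 1) (p - 1) w ∧ kd (k := k) w = z := by
  have : ∀ j, ∃ w, KIn (GR k n) (c + 1) (p - D j - 1) w ∧ kd (k := k) w = fun S => z S j := by
    intro j
    have hz1 : KIn (GR k n) c (p - D j) (fun S => z S j) := fun S =>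
      ⟨(hz S).1 j, fun hS => congrFun ((hz S).2 hS) j⟩
    have hz2 : kd (k := k) (fun S => z S j) = 0 := by
      have := kd_map (k := k) (LinearMap.proj (R := MvPolynomial (Fin n) k)
        (φ := fun _ : Fin b => MvPolynomial (Fin n) k) j) z
      rw [hz0] at this
      exact this
    by_cases hc : c ≠ 0 ∨ p - D j ≠ 0
    · exact vanR hc _ hz1 hz2
    · push Not at hc
      refine ⟨0, fun S => ⟨zero_mem _, fun _ => rfl⟩, ?_⟩
      rw [kd_zero]
      funext S
      by_cases hS : S = ∅
      · subst hS; exact (h hc.1 j (by omega)).symm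
      · refine ((hz1 S).2 ?_).symm
        rw [hc.1]
        simpa using hS
  choose w hw hwz using this
  refine ⟨fun S j => w j S, fun S => ⟨fun j => ?_, fun hS => ?_⟩, ?_⟩
  · have := (hw j S).1
    rwa [show p - D j - 1 = p - 1 - D j by ring] at this
  · funext j; exact (hw j S).2 hS
  · funext S j
    have := kd_map (k := k) (LinearMap.proj (R := MvPolynomial (Fin n) k)
        (φ := fun _ : Fin b => MvPolynomial (Fin n) k) j) (fun S j => w j S)
    have h1 := congrFun (hwz j) S
    rw [← h1]
    exact (congrFun this S).symm

lemma vanF {b : ℕ} {D : Fin b → ℤ} {c : ℕ} {p : ℤ} (h : c = 0 → ∀ j, D j ≠ p) :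
    Van k n (GF (k := k) (n := n) D) c p := by
  intro z hz hz0
  exact vanF' hz hz0 fun hc j hj => absurd hj (h hc j)

/-- grading of a submodule -/
noncomputable def GS {b : ℕ} (D : Fin b → ℤ)
    (N : Submodule (MvPolynomial (Fin n) k) (Fin b → MvPolynomial (Fin n) k)) (p : ℤ) :
    AddSubgroup N := (GF D p).comap N.subtype.toAddMonoidHom

lemma mem_GS {b : ℕ} {D : Fin b → ℤ}
    {N : Submodule (MvPolynomial (Fin n) k) (Fin b → MvPolynomial (Fin n) k)} {p : ℤ} {x : N} :
    x ∈ GS D N p ↔ (x : Fin b → MvPolynomial (Fin n) k) ∈ GF D p := Iff.rfl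

lemma xGS {b : ℕ} (D : Fin b → ℤ)
    (N : Submodule (MvPolynomial (Fin n) k) (Fin b → MvPolynomial (Fin n) k)) :
    XG k n (GS D N) := fun p m t hm => xGF D p (m : Fin b → MvPolynomial (Fin n) k) t hm

/-- homogeneous components of vectors -/
noncomputable def hcv {b : ℕ} (D : Fin b → ℤ) (p : ℤ) (w : Fin b → MvPolynomial (Fin n) k) :
    Fin b → MvPolynomial (Fin n) k := fun j => hc (p - D j) (w j)

lemma hcv_mem {b : ℕ} (D : Fin b → ℤ) (p : ℤ) (w : Fin b → MvPolynomial (Fin n) k) :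
    hcv D p w ∈ GF D p := fun _ => hc_mem _ _

lemma hcv_of_mem {b : ℕ} {D : Fin b → ℤ} {p : ℤ} {w : Fin b → MvPolynomial (Fin n) k}
    (hw : w ∈ GF D p) : hcv D p w = w := funext fun j => hc_of_mem (hw j)

lemma hcv_decomp {b : ℕ} (D : Fin b → ℤ) (w : Fin b → MvPolynomial (Fin n) k) :
    ∃ P : Finset ℤ, ∑ p ∈ P, hcv D p w = w := by
  classical
  refine ⟨univ.biUnion fun j => (w j).support.image fun a => (a.degree : ℤ) + D j, ?_⟩
  funext j
  ext a
  rw [Finset.sum_apply, coeff_sum]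
  simp only [hcv, coeff_hc]
  rw [sum_eq_single ((a.degree : ℤ) + D j)]
  · simp
  · intro p _ hp
    rw [if_neg]
    omega
  · intro h
    by_contra hne
    apply h
    rw [mem_biUnion]
    refine ⟨j, mem_univ _, mem_image.2 ⟨a, ?_, rfl⟩⟩
    rw [mem_support_iff]
    intro h0
    simp [h0] at hne

lemma mulVec_hcv {b b' : ℕ} {D : Fin b → ℤ} {E : Fin b' → ℤ}
    {A : Matrix (Fin b) (Fin b') (MvPolynomial (Fin n) k)}
    (hA : ∀ r c, A r c ∈ GR k n (E c - D r)) (p : ℤ) (w : Fin b' → MvPolynomial (Fin n) k) :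
    A.mulVec (hcv E p w) = hcv D p (A.mulVec w) := by
  funext r
  simp only [Matrix.mulVec, dotProduct, hcv, map_sum]
  refine sum_congr rfl fun c _ => ?_
  rw [hc_mul (hA r c), show p - D r - (E c - D r) = p - E c by ring]

lemma sesMat {b b' : ℕ} {D : Fin b → ℤ} {E : Fin b' → ℤ}
    {A : Matrix (Fin b) (Fin b') (MvPolynomial (Fin n) k)}
    (hA : ∀ r c, A r c ∈ GR k n (E c - D r))
    (N : Submodule (MvPolynomial (Fin n) k) (Fin b → MvPolynomial (Fin n) k))
    (N' : Submodule (MvPolynomial (Fin n) k) (Fin b' → MvPolynomial (Fin n) k))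
    (hN : ∀ x, A.mulVecLin x ∈ N) (hN2 : ∀ y ∈ N, ∃ x, A.mulVec x = y)
    (hN' : ∀ x, x ∈ N' ↔ A.mulVec x = 0) :
    SES (GS E N') (GF E) (GS D N) N'.subtype (LinearMap.codRestrict N A.mulVecLin hN) where
  xA := xGS _ _
  xB := xGF _
  xC := xGS _ _
  inj := fun a ha => by simpa using ha
  mapA := fun p a ha => ha
  mapB := fun p w hw => by
    rw [mem_GS]
    have : A.mulVec w ∈ GF D p := by
      rw [← hcv_of_mem hw, mulVec_hcv hA]
      exact hcv_mem _ _ _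
    exact this
  comp := fun a => Subtype.ext ((hN' a).1 a.2)
  ex := fun p w hw h0 => ⟨⟨w, (hN' w).2 (congrArg Subtype.val h0)⟩, hw, rfl⟩
  surj := fun p y hy => by
    obtain ⟨x, hx⟩ := hN2 y y.2
    refine ⟨hcv E p x, hcv_mem _ _ _, Subtype.ext ?_⟩
    change A.mulVec (hcv E p x) = y
    rw [mulVec_hcv hA, hx]
    exact hcv_of_mem hy

/-! ### Quotients of the ring -/

/-- homogeneous ideal -/
def HI (I : Ideal (MvPolynomial (Fin n) k)) : Prop := ∀ f ∈ I, ∀ p, hc p f ∈ I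

lemma HI.of_isHomogeneousIdeal {I : Ideal (MvPolynomial (Fin n) k)} (h : IsHomogeneousIdeal I) :
    HI I := by
  obtain ⟨T, hT, rfl⟩ := h
  intro f hf
  refine Submodule.span_induction ?_ ?_ ?_ ?_ hf
  · intro x hx p
    obtain ⟨d, hd⟩ := hT x hx
    have hd := mem_GR_iff_isHomogeneous.2 hd
    by_cases hp : p = d
    · subst hp; rw [hc_of_mem hd]; exact Ideal.subset_span hx
    · rw [hc_of_mem_ne hd hp]; exact zero_mem _
  · intro p; simp
  · intro x y _ _ hx hy p
    rw [map_add]; exact add_mem (hx p) (hy p)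
  · intro a x _ hx
    refine MvPolynomial.induction_on' a ?_ ?_
    · intro m c p
      have : monomial m c ∈ GR k n (m.degree : ℤ) :=
        mem_GR_iff_isHomogeneous.2 (isHomogeneous_monomial c rfl)
      rw [smul_eq_mul, hc_mul this]
      exact Ideal.mul_mem_left _ _ (hx _)
    · intro f g hf hg p
      rw [add_smul, map_add]; exact add_mem (hf p) (hg p)

lemma HI.sup {I J : Ideal (MvPolynomial (Fin n) k)} (hI : HI I) (hJ : HI J) : HI (I + J) := by
  intro f hf p
  obtain ⟨i, hi, j, hj, rfl⟩ := Submodule.mem_sup.1 hf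
  rw [map_add]
  exact Submodule.add_mem_sup (hI i hi p) (hJ j hj p)

lemma HI.mul {H : Ideal (MvPolynomial (Fin n) k)} (hH : HI H) {f : MvPolynomial (Fin n) k}
    {d : ℤ} (hf : f ∈ GR k n d) : HI (Ideal.span {f} * H) := by
  intro g hg p
  obtain ⟨h, hh, rfl⟩ := Ideal.mem_span_singleton_mul.1 hg
  rw [hc_mul hf]
  exact Ideal.mem_span_singleton_mul.2 ⟨_, hH h hh _, rfl⟩

lemma HI.bot : HI (⊥ : Ideal (MvPolynomial (Fin n) k)) := by
  intro f hf p
  rw [Ideal.mem_bot] at hf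
  simp [hf]

lemma HI.top : HI (⊤ : Ideal (MvPolynomial (Fin n) k)) := fun _ _ _ => trivial

/-- grading of a quotient ring -/
noncomputable def GQ (I : Ideal (MvPolynomial (Fin n) k)) (p : ℤ) : AddSubgroup (MvPolynomial (Fin n) k ⧸ I) :=
  (GR k n p).map (Ideal.Quotient.mk I).toAddMonoidHom

lemma mem_GQ {I : Ideal (MvPolynomial (Fin n) k)} {p : ℤ} {y : MvPolynomial (Fin n) k ⧸ I} :
    y ∈ GQ I p ↔ ∃ f ∈ GR k n p, Ideal.Quotient.mk I f = y := Iff.rfl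

lemma GQ_smul {I : Ideal (MvPolynomial (Fin n) k)} {p q : ℤ} {y : MvPolynomial (Fin n) k ⧸ I}
    {f : MvPolynomial (Fin n) k} (hf : f ∈ GR k n q) (hy : y ∈ GQ I p) : f • y ∈ GQ I (p + q) := by
  obtain ⟨g, hg, rfl⟩ := hy
  exact ⟨f * g, by rw [add_comm]; exact GR_mul hf hg, rfl⟩

lemma xGQ (I : Ideal (MvPolynomial (Fin n) k)) : XG k n (GQ I) :=
  fun _ _ t hm => GQ_smul (GR_X t) hm

/-- augmentation map -/
noncomputable def aug {b : ℕ} (v : Fin b → MvPolynomial (Fin n) k)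
    (I : Ideal (MvPolynomial (Fin n) k)) :
    (Fin b → MvPolynomial (Fin n) k) →ₗ[MvPolynomial (Fin n) k] MvPolynomial (Fin n) k ⧸ I :=
  (Ideal.Quotient.mkₐ (MvPolynomial (Fin n) k) I).toLinearMap ∘ₗ
    Fintype.linearCombination (MvPolynomial (Fin n) k) v

lemma aug_apply {b : ℕ} (v : Fin b → MvPolynomial (Fin n) k)
    (I : Ideal (MvPolynomial (Fin n) k)) (w : Fin b → MvPolynomial (Fin n) k) :
    aug v I w = Ideal.Quotient.mk I (∑ r, w r * v r) := rfl

lemma hc_aug {b : ℕ} {D : Fin b → ℤ} {v : Fin b → MvPolynomial (Fin n) k}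
    (hv : ∀ r, v r ∈ GR k n (D r)) (p : ℤ) (w : Fin b → MvPolynomial (Fin n) k) :
    ∑ r, hcv D p w r * v r = hc p (∑ r, w r * v r) := by
  rw [map_sum]
  refine sum_congr rfl fun r _ => ?_
  rw [mul_comm (w r), hc_mul (hv r), mul_comm]; rfl

lemma sesAug {b : ℕ} {D : Fin b → ℤ} {v : Fin b → MvPolynomial (Fin n) k}
    (hv : ∀ r, v r ∈ GR k n (D r)) {I : Ideal (MvPolynomial (Fin n) k)} (hI : HI I)
    (hs : Function.Surjective (aug v I))
    (N : Submodule (MvPolynomial (Fin n) k) (Fin b → MvPolynomial (Fin n) k))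
    (hN : ∀ x, x ∈ N ↔ aug v I x = 0) :
    SES (GS D N) (GF D) (GQ I) N.subtype (aug v I) where
  xA := xGS _ _
  xB := xGF _
  xC := xGQ _
  inj := fun a ha => by simpa using ha
  mapA := fun p a ha => ha
  mapB := fun p w hw => by
    rw [aug_apply]
    refine ⟨_, ?_, rfl⟩
    rw [← hcv_of_mem hw, hc_aug hv]
    exact hc_mem _ _
  comp := fun a => (hN a).1 a.2
  ex := fun p w hw h0 => ⟨⟨w, (hN w).2 h0⟩, hw, rfl⟩
  surj := fun p y hy => by
    obtain ⟨f, hf, rfl⟩ := hy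
    obtain ⟨x, hx⟩ := hs (Ideal.Quotient.mk I f)
    refine ⟨hcv D p x, hcv_mem _ _ _, ?_⟩
    rw [aug_apply, Ideal.Quotient.mk_eq_mk_iff_sub_mem] at hx
    change Ideal.Quotient.mk I _ = Ideal.Quotient.mk I f
    rw [Ideal.Quotient.mk_eq_mk_iff_sub_mem]
    have := hI _ hx p
    rw [map_sub, hc_of_mem hf, ← hc_aug hv] at this
    exact this

lemma mulf_aux {J H : Ideal (MvPolynomial (Fin n) k)} (f : MvPolynomial (Fin n) k) :
    J + H ≤ Submodule.comap (LinearMap.lsmul (MvPolynomial (Fin n) k) (MvPolynomial (Fin n) k) f)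
      (J + Ideal.span {f} * H) := by
  intro x hx
  obtain ⟨j, hj, h, hh, rfl⟩ := Submodule.mem_sup.1 hx
  change f * (j + h) ∈ J + Ideal.span {f} * H
  rw [mul_add]
  exact Submodule.add_mem_sup (Ideal.mul_mem_left _ _ hj)
    (Ideal.mem_span_singleton_mul.2 ⟨h, hh, rfl⟩)

lemma quot_aux {J H : Ideal (MvPolynomial (Fin n) k)} (f : MvPolynomial (Fin n) k) :
    J + Ideal.span {f} * H ≤ Submodule.comap (LinearMap.id) (J + Ideal.span {f}) := by
  change J + Ideal.span {f} * H ≤ J + Ideal.span {f}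
  exact sup_le_sup_left Ideal.mul_le_left _

lemma sesQuot {I J H K : Ideal (MvPolynomial (Fin n) k)} (hJ : HI J)
    {f : MvPolynomial (Fin n) k} (hf : f ∈ GR k n 1)
    (hnzd : ∀ g : MvPolynomial (Fin n) k, f * g ∈ J → g ∈ J)
    (hI : I = J + Ideal.span {f} * H) (hK : K = J + H) :
    ∃ (φ : (MvPolynomial (Fin n) k ⧸ K) →ₗ[MvPolynomial (Fin n) k] (MvPolynomial (Fin n) k ⧸ I))
      (ψ : (MvPolynomial (Fin n) k ⧸ I) →ₗ[MvPolynomial (Fin n) k]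
        (MvPolynomial (Fin n) k ⧸ (J + Ideal.span {f}))),
      SES (k := k) (n := n) (fun p => GQ K (p - 1)) (GQ I) (GQ (J + Ideal.span {f})) φ ψ ∧
      (∀ g, φ (Ideal.Quotient.mk _ g) = Ideal.Quotient.mk _ (f * g)) ∧
      (∀ g, ψ (Ideal.Quotient.mk _ g) = Ideal.Quotient.mk _ g) := by
  subst hI hK
  refine ⟨Submodule.mapQ _ _ _ (mulf_aux f), Submodule.mapQ _ _ _ (quot_aux f), ?_,
    fun g => rfl, fun g => rfl⟩
  exact {
  xA := by
    intro p m t hm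
    have := xGQ _ _ _ t hm
    simpa using this
  xB := xGQ _
  xC := xGQ _
  inj := by
    intro a ha
    obtain ⟨g, rfl⟩ := Ideal.Quotient.mk_surjective a
    have : f * g ∈ J + Ideal.span {f} * H := Ideal.Quotient.eq_zero_iff_mem.1 ha
    rw [Ideal.Quotient.eq_zero_iff_mem]
    obtain ⟨j, hj, x, hx, he⟩ := Submodule.mem_sup.1 this
    obtain ⟨h, hh, rfl⟩ := Ideal.mem_span_singleton_mul.1 hx
    have h1 : g - h ∈ J := hnzd _ (by rw [mul_sub, ← he]; simpa using hj)
    have := Submodule.add_mem_sup h1 hh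
    simpa using this
  mapA := by
    rintro p _ ⟨g, hg, rfl⟩
    refine ⟨f * g, ?_, rfl⟩
    have := GR_mul hf hg
    simpa using this
  mapB := by
    rintro p _ ⟨g, hg, rfl⟩
    exact ⟨g, hg, rfl⟩
  comp := by
    intro a
    obtain ⟨g, rfl⟩ := Ideal.Quotient.mk_surjective a
    have : f * g ∈ J + Ideal.span {f} := by
      apply Submodule.mem_sup_right
      exact Ideal.mul_mem_right _ _ (Ideal.mem_span_singleton_self f)
    exact Ideal.Quotient.eq_zero_iff_mem.2 this
  ex := by
    rintro p _ ⟨g, hg, rfl⟩ h0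
    have h0 : g ∈ J + Ideal.span {f} := Ideal.Quotient.eq_zero_iff_mem.1 h0
    obtain ⟨j, hj, x, hx, he⟩ := Submodule.mem_sup.1 h0
    obtain ⟨u, rfl⟩ := Ideal.mem_span_singleton'.1 hx
    refine ⟨Ideal.Quotient.mk _ (hc (p - 1) u), ⟨_, hc_mem _ _, rfl⟩, ?_⟩
    have h1 : f * hc (p - 1) u - g ∈ J := by
      have h2 : hc p g = g := hc_of_mem hg
      rw [← he, map_add, mul_comm u f, hc_mul hf] at h2
      rw [← he, mul_comm u f, ← h2]
      simpa using hJ j hj p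
    exact (Ideal.Quotient.mk_eq_mk_iff_sub_mem _ _).2 (Submodule.mem_sup_left h1)
  surj := by
    rintro p _ ⟨g, hg, rfl⟩
    exact ⟨Ideal.Quotient.mk _ g, ⟨g, hg, rfl⟩, rfl⟩ }


/-! ### Generators and resolutions -/

/-- graded submodules of a free module -/
def Gr {b : ℕ} (D : Fin b → ℤ)
    (N : Submodule (MvPolynomial (Fin n) k) (Fin b → MvPolynomial (Fin n) k)) : Prop :=
  N ≤ Submodule.span _ {w | w ∈ N ∧ ∃ p, w ∈ GF D p}

lemma van_zero {M : Type*} [AddCommGroup M] [Module (MvPolynomial (Fin n) k) M]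
    {G : ℤ → AddSubgroup M} {p : ℤ} (h : Van k n G 0 p) {m : M} (hm : m ∈ G p) :
    ∃ y : Fin n → M, (∀ t, y t ∈ G (p - 1)) ∧
      m = ∑ t, (X t : MvPolynomial (Fin n) k) • y t := by
  have hz : KIn (n := n) G 0 p (fun S => if S = ∅ then m else 0) := by
    intro S
    by_cases hS : S = ∅
    · simp [hS, hm]
    · simp [hS, zero_mem]
  obtain ⟨w, hw, hwz⟩ := h _ hz hz.kd_eq_zero
  refine ⟨fun t => w {t}, fun t => (hw _).1, ?_⟩
  have := congrFun hwz ∅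
  simp only [if_true] at this
  rw [← this]
  simp [kd, sg]

lemma exists_low {b : ℕ} (D : Fin b → ℤ) :
    ∃ L : ℤ, ∀ p < L, ∀ w : Fin b → MvPolynomial (Fin n) k, w ∈ GF D p → w = 0 := by
  obtain ⟨L, hL⟩ := Finset.exists_le (univ.image fun j => - D j)
  refine ⟨-L, fun p hp w hw => funext fun j => GR_neg ?_ (hw j)⟩
  have := hL (- D j) (mem_image_of_mem _ (mem_univ j))
  omega

lemma gen_of_van {b : ℕ} {D : Fin b → ℤ}
    {N : Submodule (MvPolynomial (Fin n) k) (Fin b → MvPolynomial (Fin n) k)} (hN : Gr D N)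
    {r : ℤ} (h : ∀ p, r < p → Van k n (GS D N) 0 p) :
    N ≤ Submodule.span _ {w | w ∈ N ∧ ∃ p ≤ r, w ∈ GF D p} := by
  obtain ⟨L, hL⟩ := exists_low (k := k) (n := n) D
  have key : ∀ m : ℕ, ∀ p < L + m, ∀ w ∈ N, w ∈ GF D p →
      w ∈ Submodule.span (MvPolynomial (Fin n) k) {w | w ∈ N ∧ ∃ p ≤ r, w ∈ GF D p} := by
    intro m
    induction m with
    | zero =>
      intro p hp w _ hw
      rw [hL p (by simpa using hp) w hw]
      exact zero_mem _
    | succ m ih =>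
      intro p hp w hwN hw
      by_cases hpr : p ≤ r
      · exact Submodule.subset_span ⟨hwN, p, hpr, hw⟩
      · obtain ⟨y, hy, hyw⟩ := van_zero (h p (by omega)) (m := (⟨w, hwN⟩ : N)) hw
        have := congrArg Subtype.val hyw
        simp only [Submodule.coe_sum, Submodule.coe_smul] at this
        rw [this]
        refine sum_mem fun t _ => Submodule.smul_mem _ _ ?_
        exact ih (p - 1) (by push_cast at hp; omega) _ (y t).2 (hy t)
  refine hN.trans (Submodule.span_le.2 ?_)
  rintro w ⟨hwN, p, hw⟩
  exact key (p - L + 1).toNat p (by omega) w hwN hw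

lemma exists_gen {b : ℕ} {D : Fin b → ℤ}
    {N : Submodule (MvPolynomial (Fin n) k) (Fin b → MvPolynomial (Fin n) k)} (hN : Gr D N) :
    ∃ r, N ≤ Submodule.span _ {w | w ∈ N ∧ ∃ p ≤ r, w ∈ GF D p} := by
  classical
  obtain ⟨s, hs, hs'⟩ := (Submodule.fg_span_iff_fg_span_finset_subset _).1
    (IsNoetherian.noetherian (Submodule.span (MvPolynomial (Fin n) k) {w | w ∈ N ∧ ∃ p, w ∈ GF D p}))
  choose! p hp using fun w (hw : w ∈ s) => (hs hw).2
  obtain ⟨r, hr⟩ := Finset.exists_le (s.image p)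
  refine ⟨r, hN.trans ?_⟩
  rw [hs']
  exact Submodule.span_mono fun w hw =>
    ⟨(hs hw).1, p w, hr _ (mem_image_of_mem _ hw), hp w hw⟩

lemma mulVec_of {b b' : ℕ} (g : Fin b' → Fin b → MvPolynomial (Fin n) k)
    (x : Fin b' → MvPolynomial (Fin n) k) :
    (Matrix.of fun r c => g c r).mulVec x = ∑ c, x c • g c := by
  funext r
  simp [Matrix.mulVec, dotProduct, Finset.sum_apply, mul_comm]

lemma step {b : ℕ} {D : Fin b → ℤ}
    {N : Submodule (MvPolynomial (Fin n) k) (Fin b → MvPolynomial (Fin n) k)} {r : ℤ}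
    (hN : N ≤ Submodule.span _ {w | w ∈ N ∧ ∃ p ≤ r, w ∈ GF D p}) :
    ∃ (b' : ℕ) (E : Fin b' → ℤ) (A : Matrix (Fin b) (Fin b') (MvPolynomial (Fin n) k)),
      (∀ r c, A r c ∈ GR k n (E c - D r)) ∧ (∀ c, E c ≤ r) ∧ (∀ x, A.mulVec x ∈ N) ∧
      (∀ y ∈ N, ∃ x, A.mulVec x = y) ∧
      (∀ p, ∀ w ∈ GF E p, A.mulVec w = 0 → ∀ j, E j = p → w j = 0) := by
  classical
  set T : Set (Fin b → MvPolynomial (Fin n) k) := {w | w ∈ N ∧ ∃ p ≤ r, w ∈ GF D p} with hT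
  have hTN : Submodule.span (MvPolynomial (Fin n) k) T = N :=
    le_antisymm (Submodule.span_le.2 fun w hw => hw.1) hN
  have hex : ∃ m : ℕ, ∃ g : Fin m → Fin b → MvPolynomial (Fin n) k, (∀ c, g c ∈ T) ∧
      Submodule.span (MvPolynomial (Fin n) k) (Set.range g) = N := by
    obtain ⟨s, hs, hs'⟩ := (Submodule.fg_span_iff_fg_span_finset_subset _).1
      (IsNoetherian.noetherian (Submodule.span (MvPolynomial (Fin n) k) T))
    refine ⟨s.card, fun c => (s.equivFin.symm c : Fin b → MvPolynomial (Fin n) k),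
      fun c => hs (s.equivFin.symm c).2, ?_⟩
    rw [← hTN, hs']
    congr 1
    ext w
    constructor
    · rintro ⟨c, rfl⟩; exact (s.equivFin.symm c).2
    · intro hw; exact ⟨s.equivFin ⟨w, hw⟩, by simp⟩
  have hmin := fun m => Nat.find_min hex (m := m)
  obtain ⟨g, hgT, hgN⟩ := Nat.find_spec hex
  generalize Nat.find hex = m at *
  choose E hE hgE using fun c => (hgT c).2
  refine ⟨m, E, Matrix.of fun r c => g c r, fun r c => hgE c r, hE, ?_, ?_, ?_⟩
  · intro x
    rw [mulVec_of]
    exact sum_mem fun c _ => Submodule.smul_mem _ _ (hgT c).1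
  · intro y hy
    rw [← hgN, Submodule.mem_span_range_iff_exists_fun] at hy
    obtain ⟨x, hx⟩ := hy
    exact ⟨x, by rw [mulVec_of, hx]⟩
  · intro p w hw h0 j hj
    rw [mulVec_of] at h0
    have hw0 : w j ∈ GR k n 0 := by
      have := hw j
      rwa [hj, sub_self] at this
    have hwC := GR_zero_const hw0
    by_contra hne
    have ha : coeff 0 (w j) ≠ 0 := by
      intro h; rw [h, map_zero] at hwC; exact hne hwC
    obtain ⟨m', rfl⟩ : ∃ m', m = m' + 1 := ⟨m - 1, by have := j.2; omega⟩
    apply hmin m' (Nat.lt_succ_self _)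
    refine ⟨fun c => g (j.succAbove c), fun c => hgT _, ?_⟩
    apply le_antisymm
    · rw [← hgN]
      apply Submodule.span_mono
      rintro _ ⟨c, rfl⟩
      exact ⟨_, rfl⟩
    · rw [← hgN, Submodule.span_le]
      rintro _ ⟨c, rfl⟩
      rcases Fin.eq_self_or_eq_succAbove j c with rfl | ⟨c, rfl⟩
      · rw [Fin.sum_univ_succAbove _ c] at h0
        have h1 : g c = (MvPolynomial.C (-(coeff 0 (w c))⁻¹) : MvPolynomial (Fin n) k) •
            ∑ i, w (c.succAbove i) • g (c.succAbove i) := by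
          have h2 : ∑ i, w (c.succAbove i) • g (c.succAbove i) = - (w c • g c) :=
            (neg_eq_of_add_eq_zero_right h0).symm
          have h3 : (MvPolynomial.C (-(coeff 0 (w c))⁻¹) : MvPolynomial (Fin n) k) * w c = -1 := by
            conv_lhs => rw [hwC]
            rw [coeff_C, if_pos rfl, ← map_mul, neg_mul, inv_mul_cancel₀ ha, map_neg, map_one]
          rw [h2, smul_neg, smul_smul, h3, neg_smul, one_smul, neg_neg]
        rw [SetLike.mem_coe, h1]
        refine Submodule.smul_mem _ _ (sum_mem fun i _ => Submodule.smul_mem _ _ ?_)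
        exact Submodule.subset_span ⟨i, rfl⟩
      · exact Submodule.subset_span ⟨c, rfl⟩

lemma gr_ker {b b' : ℕ} {D : Fin b → ℤ} {E : Fin b' → ℤ}
    {A : Matrix (Fin b) (Fin b') (MvPolynomial (Fin n) k)}
    (hA : ∀ r c, A r c ∈ GR k n (E c - D r)) : Gr E (LinearMap.ker A.mulVecLin) := by
  intro w hw
  obtain ⟨P, hP⟩ := hcv_decomp E w
  have hw : A.mulVec w = 0 := hw
  rw [← hP]
  refine sum_mem fun p _ => Submodule.subset_span ⟨?_, p, hcv_mem _ _ _⟩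
  change A.mulVec _ = 0
  rw [mulVec_hcv hA, hw]
  funext j; simp [hcv]

/-- a syzygy module together with its regularity bound -/
structure St (k : Type*) [Field k] (n : ℕ) where
  r : ℤ
  b : ℕ
  D : Fin b → ℤ
  N : Submodule (MvPolynomial (Fin n) k) (Fin b → MvPolynomial (Fin n) k)
  gr : Gr D N
  reg : ∀ c p, r < p → Van k n (GS D N) c p

/-- what we require from one step of the resolution -/
structure IsStep (s s' : St k n) (A : Matrix (Fin s.b) (Fin s'.b) (MvPolynomial (Fin n) k)) :
    Prop where
  hr : s'.r = s.r + 1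
  hA : ∀ r c, A r c ∈ GR k n (s'.D c - s.D r)
  hD : ∀ c, s'.D c ≤ s.r
  mem : ∀ x, A.mulVec x ∈ s.N
  surj : ∀ y ∈ s.N, ∃ x, A.mulVec x = y
  ker : ∀ x, x ∈ s'.N ↔ A.mulVec x = 0
  min : ∀ p, ∀ w ∈ GF s'.D p, A.mulVec w = 0 → ∀ j, s'.D j = p → w j = 0

lemma exists_step (s : St k n) : ∃ (s' : St k n)
    (A : Matrix (Fin s.b) (Fin s'.b) (MvPolynomial (Fin n) k)), IsStep s s' A := by
  obtain ⟨b', E, A, hA, hE, h1, h2, h3⟩ := step (gen_of_van s.gr (s.reg 0))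
  refine ⟨⟨s.r + 1, b', E, LinearMap.ker A.mulVecLin, gr_ker hA, fun c p hp => ?_⟩, A,
    ⟨rfl, hA, hE, h1, h2, fun x => Iff.rfl, h3⟩⟩
  refine (sesMat hA s.N _ h1 h2 (fun x => Iff.rfl)).van_left (vanF fun _ j => ?_)
    (s.reg _ _ (by omega))
  have := hE j
  omega

lemma IsStep.ses {s s' : St k n} {A : Matrix (Fin s.b) (Fin s'.b) (MvPolynomial (Fin n) k)}
    (h : IsStep s s' A) : SES (GS s'.D s'.N) (GF s'.D) (GS s.D s.N) s'.N.subtype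
      (LinearMap.codRestrict s.N A.mulVecLin h.mem) :=
  sesMat h.hA s.N s'.N h.mem h.surj h.ker

lemma IsStep.van {s s' : St k n} {A : Matrix (Fin s.b) (Fin s'.b) (MvPolynomial (Fin n) k)}
    (h : IsStep s s' A) {c : ℕ} (hc : c ≠ 0) (hv : ∀ p, Van k n (GS s.D s.N) (c + 1) p) (p : ℤ) :
    Van k n (GS s'.D s'.N) c p :=
  h.ses.van_left (vanF fun h0 => absurd h0 hc) (hv _)

lemma IsStep.bot {s s' : St k n} {A : Matrix (Fin s.b) (Fin s'.b) (MvPolynomial (Fin n) k)}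
    (h : IsStep s s' A) (hv : ∀ p, Van k n (GS s.D s.N) 1 p) : s'.N = ⊥ := by
  have h0 : ∀ p, Van k n (GS s'.D s'.N) 0 p := by
    intro p z hz _
    have hz1 := hz.map s'.N.subtype h.ses.mapA
    obtain ⟨w, hw, hwz⟩ := vanF' hz1 hz1.kd_eq_zero
      (fun _ j hj => h.min p _ (hz ∅).1 ((h.ker _).1 (z ∅).2) j hj)
    exact h.ses.van_left' (hv _) hw hwz
  obtain ⟨L, hL⟩ := exists_low (k := k) (n := n) s'.D
  rw [eq_bot_iff]
  refine (gen_of_van s'.gr (r := L - 1) fun p _ => h0 p).trans (Submodule.span_le.2 ?_)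
  rintro w ⟨_, p, hp, hw⟩
  exact (Submodule.mem_bot _).2 (hL p (by omega) w hw)

lemma IsStep.b_eq_zero {s s' : St k n} {A : Matrix (Fin s.b) (Fin s'.b) (MvPolynomial (Fin n) k)}
    (h : IsStep s s' A) (hN : s.N = ⊥) : s'.b = 0 := by
  by_contra hb
  let j : Fin s'.b := ⟨0, by omega⟩
  have h1 : A.mulVec (Pi.single j 1) = 0 := by
    have := h.mem (Pi.single j 1)
    rwa [hN, Submodule.mem_bot] at this
  have := h.min (s'.D j) (Pi.single j 1) (fun i => ?_) h1 j rfl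
  · simp at this
  · by_cases hi : i = j
    · subst hi; simpa using GR_one
    · rw [Pi.single_eq_of_ne hi]; exact zero_mem _

lemma bot_of_b {s : St k n} (h : s.b = 0) : s.N = ⊥ := by
  rw [eq_bot_iff]
  intro w _
  rw [Submodule.mem_bot]
  funext j
  exact absurd j.2 (by omega)

/-- regularity via Koszul homology -/
def Rg (I : Ideal (MvPolynomial (Fin n) k)) (r : ℤ) : Prop :=
  ∀ c p, r < p → Van k n (GQ I) c p

lemma Rg.mono {I : Ideal (MvPolynomial (Fin n) k)} {r r' : ℤ} (h : Rg I r) (hr : r ≤ r') :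
    Rg I r' := fun c p hp => h c p (by omega)

lemma aug_one_surj (I : Ideal (MvPolynomial (Fin n) k)) :
    Function.Surjective (aug (fun _ : Fin 1 => (1 : MvPolynomial (Fin n) k)) I) := by
  intro y
  obtain ⟨f, rfl⟩ := Ideal.Quotient.mk_surjective y
  exact ⟨fun _ => f, by simp [aug_apply]⟩

lemma sesOne {I : Ideal (MvPolynomial (Fin n) k)} (hI : HI I) :
    SES (GS (fun _ : Fin 1 => 0) (LinearMap.ker (aug (fun _ : Fin 1 => 1) I)))
      (GF (fun _ : Fin 1 => 0)) (GQ I)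
      (LinearMap.ker (aug (fun _ : Fin 1 => 1) I)).subtype (aug (fun _ : Fin 1 => 1) I) :=
  sesAug (fun _ => GR_one) hI (aug_one_surj I) _ (fun _ => Iff.rfl)

lemma gr_one {I : Ideal (MvPolynomial (Fin n) k)} (hI : HI I) :
    Gr (fun _ : Fin 1 => 0) (LinearMap.ker (aug (fun _ : Fin 1 => 1) I)) := by
  intro w hw
  obtain ⟨P, hP⟩ := hcv_decomp (fun _ : Fin 1 => 0) w
  have hw : aug (fun _ : Fin 1 => 1) I w = 0 := hw
  rw [← hP]
  refine sum_mem fun p _ => Submodule.subset_span ⟨?_, p, hcv_mem _ _ _⟩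
  change aug (fun _ : Fin 1 => 1) I _ = 0
  rw [aug_apply, Ideal.Quotient.eq_zero_iff_mem] at hw ⊢
  rw [hc_aug (D := fun _ : Fin 1 => 0) (fun _ => GR_one)]
  exact hI _ hw p

lemma exists_rg_aux (c : ℕ) : ∀ {b : ℕ} {D : Fin b → ℤ}
    {N : Submodule (MvPolynomial (Fin n) k) (Fin b → MvPolynomial (Fin n) k)}, Gr D N →
    ∃ r, ∀ p, r < p → Van k n (GS D N) c p := by
  induction c with
  | zero =>
    intro b D N hN
    obtain ⟨r, hr⟩ := exists_gen hN
    obtain ⟨b', E, A, hA, hE, h1, h2, h3⟩ := step hr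
    refine ⟨r, fun p hp => (sesMat hA N _ h1 h2 (fun x => Iff.rfl :
      ∀ x, x ∈ LinearMap.ker A.mulVecLin ↔ _)).van_right (vanF fun _ j => ?_) ?_⟩
    · have := hE j; omega
    · intro c' h; omega
  | succ c ih =>
    intro b D N hN
    obtain ⟨r, hr⟩ := exists_gen hN
    obtain ⟨b', E, A, hA, hE, h1, h2, h3⟩ := step hr
    obtain ⟨r', hr'⟩ := ih (gr_ker hA)
    refine ⟨r', fun p hp => (sesMat hA N _ h1 h2 (fun x => Iff.rfl :
      ∀ x, x ∈ LinearMap.ker A.mulVecLin ↔ _)).van_right (vanF fun h => by omega) ?_⟩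
    intro c' h
    obtain rfl : c = c' := by omega
    exact hr' _ (by omega)

lemma exists_rg {I : Ideal (MvPolynomial (Fin n) k)} (hI : HI I) : ∃ r, Rg I r := by
  have : ∀ c : ℕ, ∃ r : ℤ, ∀ p, r < p → Van k n (GQ I) c p := by
    intro c
    rcases c with _ | c
    · refine ⟨0, fun p hp => (sesOne hI).van_right (vanF fun _ j => by omega) ?_⟩
      intro c' h; omega
    · obtain ⟨r, hr⟩ := exists_rg_aux c (gr_one hI)
      refine ⟨r, fun p hp => (sesOne hI).van_right (vanF fun h => by omega) ?_⟩
      intro c' h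
      obtain rfl : c = c' := by omega
      exact hr _ (by omega)
  choose r hr using this
  obtain ⟨M, hM⟩ := Finset.exists_le ((range (n + 1)).image r)
  refine ⟨M, fun c p hp => ?_⟩
  by_cases hc : n < c
  · exact Van.of_gt _ hc p
  · have := hM (r c) (mem_image_of_mem _ (by simp; omega))
    exact hr c p (by omega)


/-! ### Comparison with graded free resolutions -/

lemma rg_of_res_aux {I : Ideal (MvPolynomial (Fin n) k)} (F : GradedFreeRes I) {r : ℤ}
    (hF : ∀ (i : ℕ) (j : Fin (F.b i)), F.D i j - (i : ℤ) ≤ r) (c : ℕ) :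
    ∀ (i : ℕ) (p : ℤ), r + i + 1 < p →
      Van k n (GS (F.D i) (LinearMap.range (F.A i).mulVecLin)) c p := by
  induction c with
  | zero =>
    intro i p hp
    refine (sesMat (fun r c => homogOfDeg_iff.1 (F.hA i r c)) (LinearMap.range (F.A i).mulVecLin)
      (LinearMap.range (F.A (i + 1)).mulVecLin) (fun x => ⟨x, rfl⟩) (fun y hy => hy)
      (fun x => (F.hex i x).symm)).van_right (vanF fun _ j => ?_) ?_
    · have := hF (i + 1) j
      push_cast at this
      omega
    · intro c' h; omega
  | succ c ih =>
    intro i p hp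
    refine (sesMat (fun r c => homogOfDeg_iff.1 (F.hA i r c)) (LinearMap.range (F.A i).mulVecLin)
      (LinearMap.range (F.A (i + 1)).mulVecLin) (fun x => ⟨x, rfl⟩) (fun y hy => hy)
      (fun x => (F.hex i x).symm)).van_right (vanF fun h => by omega) ?_
    intro c' h
    obtain rfl : c = c' := by omega
    exact ih (i + 1) _ (by push_cast; omega)

lemma rg_of_res {I : Ideal (MvPolynomial (Fin n) k)} (hI : HI I) (F : GradedFreeRes I) {r : ℤ}
    (hF : ∀ (i : ℕ) (j : Fin (F.b i)), F.D i j - (i : ℤ) ≤ r) : Rg I r := by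
  intro c p hp
  refine (sesAug (fun r => homogOfDeg_iff.1 (F.hv r)) hI F.haug
    (LinearMap.range (F.A 0).mulVecLin) (fun x => (F.hex0 x).symm)).van_right
    (vanF fun _ j => ?_) ?_
  · have := hF 0 j
    simp only [Nat.cast_zero] at this
    omega
  · intro c' _
    exact rg_of_res_aux F hF c' 0 _ (by push_cast; omega)

lemma res_of_top (r : ℤ) : ∃ F : GradedFreeRes (⊤ : Ideal (MvPolynomial (Fin n) k)),
    ∀ (i : ℕ) (j : Fin (F.b i)), F.D i j - (i : ℤ) ≤ r := by
  have : Subsingleton (MvPolynomial (Fin n) k ⧸ (⊤ : Ideal (MvPolynomial (Fin n) k))) :=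
    Ideal.Quotient.subsingleton_iff.2 rfl
  refine ⟨⟨0, fun _ => 0, fun _ _ => rfl, fun _ j => j.elim0, fun _ => 0, fun j => j.elim0,
    fun j => j.elim0, fun _ j => j.elim0, ?_, ?_, ?_⟩, fun _ j => j.elim0⟩
  · intro y
    exact ⟨0, Subsingleton.elim _ _⟩
  · intro y
    exact ⟨fun _ => ⟨0, Subsingleton.elim _ _⟩, fun _ => Subsingleton.elim _ _⟩
  · intro _ y
    exact ⟨fun _ => ⟨0, Subsingleton.elim _ _⟩, fun _ => Subsingleton.elim _ _⟩

lemma rg_nonneg {I : Ideal (MvPolynomial (Fin n) k)} (hI : I ≠ ⊤) {r : ℤ} (h : Rg I r) :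
    0 ≤ r := by
  by_contra hr
  obtain ⟨y, hy, hyw⟩ := van_zero (h 0 0 (by omega)) (m := Ideal.Quotient.mk I 1)
    ⟨1, GR_one, rfl⟩
  apply hI
  rw [Ideal.eq_top_iff_one, ← Ideal.Quotient.eq_zero_iff_mem, hyw]
  refine sum_eq_zero fun t _ => ?_
  obtain ⟨g, hg, hgy⟩ := hy t
  rw [← hgy, GR_neg (by omega) hg, map_zero, smul_zero]

/-- the sequence of syzygies -/
noncomputable def sq (nxt : St k n → St k n) (s : St k n) (i : ℕ) : St k n :=
  Nat.rec s (fun _ s => nxt s) i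

lemma res_of_rg {I : Ideal (MvPolynomial (Fin n) k)} (hI : HI I) {r : ℤ} (h : Rg I r) :
    ∃ F : GradedFreeRes I, ∀ (i : ℕ) (j : Fin (F.b i)), F.D i j - (i : ℤ) ≤ r := by
  by_cases hT : I = ⊤
  · subst hT; exact res_of_top r
  have hr := rg_nonneg hT h
  let s0 : St k n := ⟨r + 1, 1, fun _ => 0, LinearMap.ker (aug (fun _ : Fin 1 => 1) I), gr_one hI,
    fun c p hp => (sesOne hI).van_left (vanF fun _ j => by omega) (h _ _ (by omega))⟩
  choose nxt A hst using exists_step (k := k) (n := n)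
  have hs0 : ∀ i, IsStep (sq nxt s0 i) (sq nxt s0 (i + 1)) (A (sq nxt s0 i)) := fun i => hst _
  have hrr : ∀ i : ℕ, (sq nxt s0 i).r = r + 1 + i := by
    intro i
    induction i with
    | zero => simp [sq, s0]
    | succ i ih => rw [(hs0 i).hr, ih]; push_cast; ring
  have hvan : ∀ i c : ℕ, c ≠ 0 → n ≤ c + i → ∀ p,
      Van k n (GS (sq nxt s0 i).D (sq nxt s0 i).N) c p := by
    intro i
    induction i with
    | zero =>
      intro c hc hn p
      exact (sesOne hI).van_left (vanF fun h => absurd h hc) (Van.of_gt _ (by omega) _)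
    | succ i ih =>
      intro c hc hn p
      exact (hs0 i).van hc (ih (c + 1) (by omega) (by omega)) p
  have hbot : (sq nxt s0 (n + 1)).N = ⊥ := (hs0 n).bot (hvan n 1 one_ne_zero (by omega))
  have hbn : ∀ i, (sq nxt s0 (n + 1 + i)).N = ⊥ := by
    intro i
    induction i with
    | zero => exact hbot
    | succ i ih => exact bot_of_b ((hs0 (n + 1 + i)).b_eq_zero ih)
  refine ⟨⟨n + 1, fun i => (sq nxt s0 i).b, ?_, fun i => (sq nxt s0 i).D,
    fun i => A (sq nxt s0 i), fun _ => 1, fun _ => homogOfDeg_iff.2 GR_one,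
    fun i r c => homogOfDeg_iff.2 ((hs0 i).hA r c), aug_one_surj I, ?_, ?_⟩, ?_⟩
  · intro i hi
    obtain ⟨j, rfl⟩ : ∃ j, i = n + 1 + j + 1 := ⟨i - n - 2, by omega⟩
    exact (hs0 (n + 1 + j)).b_eq_zero (hbn j)
  · intro y
    constructor
    · intro hy
      exact (hs0 0).surj y hy
    · rintro ⟨x, rfl⟩
      exact (hs0 0).mem x
  · intro i y
    constructor
    · intro hy
      exact (hs0 (i + 1)).surj y (((hs0 i).ker y).2 hy)
    · rintro ⟨x, rfl⟩
      exact ((hs0 i).ker _).1 ((hs0 (i + 1)).mem x)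
  · intro i j
    rcases i with _ | i
    · change (0 : ℤ) - ((0 : ℕ) : ℤ) ≤ r
      simpa using hr
    · have h1 := (hs0 i).hD j
      rw [hrr i] at h1
      push_cast
      omega

lemma regQuot_eq {I : Ideal (MvPolynomial (Fin n) k)} (hI : HI I) :
    regQuot I = sInf {r : ℤ | Rg I r} := by
  unfold regQuot
  congr 1
  ext r
  exact ⟨fun ⟨F, hF⟩ => rg_of_res hI F hF, fun h => res_of_rg hI h⟩

/-! ### The theorem -/

lemma KIn.ke {M : Type*} [AddCommGroup M]
    {G : ℤ → AddSubgroup M} {c : ℕ} {p : ℤ} {u : Finset (Fin n) → M} (hu : KIn G c p u)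
    (t : Fin n) : KIn G (c + 1) p (ke t u) := by
  intro S
  unfold KR.ke
  split_ifs with ht
  · refine ⟨zsmul_mem (hu _).1 _, fun hS => ?_⟩
    rw [(hu _).2, smul_zero]
    rw [card_erase_of_mem ht]
    have : 0 < S.card := card_pos.2 ⟨t, ht⟩
    omega
  · exact ⟨zero_mem _, fun _ => rfl⟩

lemma kd_sum {M : Type*} [AddCommGroup M] [Module (MvPolynomial (Fin n) k) M] {ι : Type*}
    (s : Finset ι) (w : ι → Finset (Fin n) → M) :
    kd (k := k) (∑ i ∈ s, w i) = ∑ i ∈ s, kd (k := k) (w i) := by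
  classical
  induction s using Finset.induction_on with
  | empty => simp [kd_zero]
  | insert i s hi ih => rw [sum_insert hi, sum_insert hi, kd_add, ih]

lemma van_J_of_I {I J H : Ideal (MvPolynomial (Fin n) k)} (hJ : HI J)
    {f : MvPolynomial (Fin n) k} (hf : f ∈ GR k n 1)
    (hnzd : ∀ g : MvPolynomial (Fin n) k, f * g ∈ J → g ∈ J)
    (hI : I = J + Ideal.span {f} * H) {c : ℕ} {p : ℤ} (h : Van k n (GQ I) c p) :
    Van k n (GQ J) c p := by
  obtain ⟨φ, ψ, E, hφ, hψ⟩ := sesQuot (I := J) (H := ⊥) (K := J) hJ hf hnzd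
    (by simp) (by simp)
  have hJI : J ≤ I := by rw [hI]; exact le_sup_left
  have hIf : I ≤ J + Ideal.span {f} := by
    rw [hI]; exact sup_le_sup_left Ideal.mul_le_left _
  let π : (MvPolynomial (Fin n) k ⧸ J) →ₗ[MvPolynomial (Fin n) k] (MvPolynomial (Fin n) k ⧸ I) :=
    Submodule.mapQ _ _ LinearMap.id hJI
  have hπ : ∀ g, π (Ideal.Quotient.mk _ g) = Ideal.Quotient.mk _ g := fun g => rfl
  have hker : ∀ x, π x = 0 → ψ x = 0 := by
    intro x hx
    obtain ⟨g, rfl⟩ := Ideal.Quotient.mk_surjective x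
    rw [hπ, Ideal.Quotient.eq_zero_iff_mem] at hx
    rw [hψ, Ideal.Quotient.eq_zero_iff_mem]
    exact hIf hx
  have hφ' : ∀ x, φ x = f • x := by
    intro x
    obtain ⟨g, rfl⟩ := Ideal.Quotient.mk_surjective x
    rw [hφ]; rfl
  have hmap : ∀ p a, a ∈ GQ J p → π a ∈ GQ I p := by
    rintro p _ ⟨g, hg, rfl⟩; exact ⟨g, hg, rfl⟩
  have hsurj : ∀ p a, a ∈ GQ I p → ∃ b ∈ GQ J p, π b = a := by
    rintro p _ ⟨g, hg, rfl⟩; exact ⟨_, ⟨g, hg, rfl⟩, rfl⟩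
  intro z hz hz0
  obtain ⟨w, hw, hwz⟩ := h _ (hz.map π hmap) (by rw [kd_map, hz0]; funext S; simp)
  obtain ⟨y, hy, rfl⟩ := KIn.lift π hsurj hw
  rw [kd_map] at hwz
  obtain ⟨u, hu, hue⟩ := E.lift' (hz.sub (hy.kd' (xGQ J))) (by
    funext S
    refine hker _ ?_
    simpa [sub_eq_zero] using (congrFun hwz S).symm)
  have hu0 : kd (k := k) u = 0 := E.ext (by
    rw [← kd_map, hue, kd_sub, kd_kd, hz0]; funext S; simp)
  obtain ⟨a, ha, hfa⟩ := van_zero (vanR (k := k) (n := n) (c := 0) (p := 1) (by simp)) hf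
  have hu' : KIn (GQ J) c (p - 1) u := hu
  refine ⟨y + ∑ t, fun S => a t • ke t u S, hy.add ?_, ?_⟩
  · intro S
    rw [Finset.sum_apply]
    refine ⟨sum_mem fun t _ => ?_, fun hS => sum_eq_zero fun t _ => ?_⟩
    · have := GQ_smul (ha t) ((hu'.ke t) S).1
      simpa using this
    · rw [((hu'.ke t) S).2 hS, smul_zero]
  · rw [kd_add, kd_sum]
    have h1 : ∑ t, kd (k := k) (fun S => a t • ke t u S) = fun S => φ (u S) := by
      funext S
      rw [Finset.sum_apply, hφ', hfa, sum_smul]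
      refine sum_congr rfl fun t _ => ?_
      rw [kd_smul]
      have h2 := kd_ke (k := k) t u S
      rw [hu0, ke_zero, Pi.zero_apply, add_zero] at h2
      dsimp only
      rw [h2, smul_smul, smul_eq_mul, mul_comm]
    rw [h1, hue]; abel

lemma rg_Jf {J : Ideal (MvPolynomial (Fin n) k)} (hJ : HI J)
    {f : MvPolynomial (Fin n) k} (hf : f ∈ GR k n 1)
    (hnzd : ∀ g : MvPolynomial (Fin n) k, f * g ∈ J → g ∈ J) {r : ℤ} (h : Rg J r) :
    Rg (J + Ideal.span {f}) r := by
  obtain ⟨φ, ψ, E, hφ, hψ⟩ := sesQuot (I := J) (H := ⊥) (K := J) hJ hf hnzd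
    (by simp) (by simp)
  intro c p hp
  refine E.van_right (h c p hp) fun c' _ z hz hz0 => ?_
  have hz' : KIn (GQ J) c' p z := by simpa [KIn] using hz
  obtain ⟨w, hw, hwz⟩ := h c' p hp z hz' hz0
  exact ⟨w, by simpa [KIn] using hw, hwz⟩

lemma main {I J H : Ideal (MvPolynomial (Fin n) k)} (hJ : HI J) (hH : HI H)
    {f : MvPolynomial (Fin n) k} (hf : f ∈ GR k n 1)
    (hnzd : ∀ g : MvPolynomial (Fin n) k, f * g ∈ J → g ∈ J)
    (hI : I = J + Ideal.span {f} * H) :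
    regQuot I = regQuot (J + H) + 1 ∨ regQuot I = regQuot J := by
  have hIh : HI I := by rw [hI]; exact hJ.sup (hH.mul hf)
  have hKh : HI (J + H) := hJ.sup hH
  rw [regQuot_eq hIh, regQuot_eq hKh, regQuot_eq hJ]
  obtain ⟨φ, ψ, E, -, -⟩ := sesQuot hJ hf hnzd hI rfl
  have h1 : ∀ r, Rg I r → Rg J r := fun r h c p hp => van_J_of_I hJ hf hnzd hI (h c p hp)
  have h3 : ∀ r, Rg (J + H) (r - 1) → Rg J r → Rg I r := fun r hA hC c p hp =>
    E.van_mid (hA c (p - 1) (by omega)) (rg_Jf hJ hf hnzd hC c p hp)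
  have h4 : ∀ r, Rg I r → Rg J (r - 1) → Rg (J + H) (r - 1) := by
    intro r hB hC c p hp
    have := E.van_left (c := c) (p := p + 1) (hB c (p + 1) (by omega))
      (rg_Jf hJ hf hnzd hC _ _ (by omega))
    intro z hz hz0
    obtain ⟨w, hw, hwz⟩ := this z (by simpa [KIn] using hz) hz0
    exact ⟨w, by simpa [KIn] using hw, hwz⟩
  by_cases hS : ∀ r, Rg J r → Rg I r
  · right
    congr 1
    ext r
    exact ⟨h1 r, hS r⟩
  · left
    push Not at hS
    obtain ⟨r0, hr0J, hr0I⟩ := hS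
    have hIK : ∀ r, Rg I r ↔ Rg (J + H) (r - 1) := by
      intro r
      constructor
      · intro h
        have : r0 < r := by
          by_contra hh
          exact hr0I (h.mono (by omega))
        exact h4 r h (hr0J.mono (by omega))
      · intro h
        have : r0 < r := by
          by_contra hh
          exact hr0I (h3 r0 (h.mono (by omega)) hr0J)
        exact h3 r h (hr0J.mono (by omega))
    have hne : {r | Rg (J + H) r}.Nonempty := exists_rg hKh
    have hbd : BddBelow {r | Rg (J + H) r} := by
      refine ⟨r0 - 1, fun r hr => ?_⟩
      by_contra hh
      refine hr0I ((hIK r0).2 (Rg.mono hr ?_))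
      omega
    have hmem := Int.csInf_mem hne hbd
    have hle := fun r hr => csInf_le hbd (a := r) hr
    generalize sInf {r | Rg (J + H) r} = m at hmem hle
    apply IsLeast.csInf_eq
    constructor
    · change Rg I (m + 1)
      rw [hIK]; simpa using hmem
    · intro r hr
      have := hle (r - 1) ((hIK r).1 hr)
      omega

end
end KR

/-- **Theorem (regularity modulo a linear form).** Let `I = J + fH` where `J, H` are
homogeneous ideals and `f` is a linear form which is a non-zerodivisor on `R/J`. Then
`reg R/I ∈ {reg R/(J+H) + 1, reg R/J}` (equivalently,
`reg R/I ∈ {reg R/(I:f) + 1, reg R/(I,f)}`). -/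
theorem reg_modulo_linear_form {k : Type*} [Field k] {n : ℕ}
    (J H : Ideal (MvPolynomial (Fin n) k))
    (hJ : IsHomogeneousIdeal J) (hH : IsHomogeneousIdeal H)
    (f : MvPolynomial (Fin n) k) (hf1 : f.IsHomogeneous 1) (hf0 : f ≠ 0)
    (hnzd : ∀ g : MvPolynomial (Fin n) k, f * g ∈ J → g ∈ J)
    (I : Ideal (MvPolynomial (Fin n) k)) (hI : I = J + Ideal.span {f} * H) :
    regQuot I = regQuot (J + H) + 1 ∨ regQuot I = regQuot J := by
  exact KR.main (KR.HI.of_isHomogeneousIdeal hJ) (KR.HI.of_isHomogeneousIdeal hH)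
    (by exact_mod_cast KR.mem_GR_iff_isHomogeneous.2 hf1) hnzd hI
end
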